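/- arXiv:1811.11324 — 2 statements merged into one kernel-verified Lean document; each statement's English description precedes it below -/
import Mathlib

section
/- Let T be a scalar Calderón–Zygmund operator on ℝ^d with modulus of continuity ω satisfying the Dini condition, let ρ ∈ (2,∞), and assume the variation operator V_ρ(T_*) is bounded on L^q(ℝ^d) for some q ∈ (1,∞). Then V_ρ(T_*) is of weak type (1,1): there is a constant C such that for every f ∈ L^1(ℝ^d) and every λ > 0, |{x ∈ ℝ^d : V_ρ(T_* f)(x) > λ}| ≤ C λ^{−1} ‖f‖_{L^1(ℝ^d)}. -/
open MeasureTheory Set Filter Classical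
open scoped ENNReal
noncomputable section

abbrev Rd (d : ℕ) := EuclideanSpace ℝ (Fin d)

/-- An axis-parallel (half-open) cube in `ℝ^d`, given by its center and side length. -/
structure Cube (d : ℕ) where
  c : Fin d → ℝ
  l : ℝ
  hl : 0 < l

/-- The underlying (half-open) set of a cube. -/
def Cube.set {d : ℕ} (Q : Cube d) : Set (Rd d) :=
  {y | ∀ i, Q.c i - Q.l / 2 ≤ y i ∧ y i < Q.c i + Q.l / 2}

/-- The (half-open) set `tQ`, the cube concentric with `Q` of side length `t·ℓ(Q)`. -/
def Cube.dilate {d : ℕ} (Q : Cube d) (t : ℝ) : Set (Rd d) :=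
  {y | ∀ i, Q.c i - t * Q.l / 2 ≤ y i ∧ y i < Q.c i + t * Q.l / 2}

/-- The volume `|Q| = ℓ(Q)^d` of a cube, as an extended nonnegative real. -/
def Cube.vol {d : ℕ} (Q : Cube d) : ℝ≥0∞ := ENNReal.ofReal (Q.l ^ d)

/-- `Q` is one of the dyadic subcubes of `Q₀` obtained by repeated subdivision of `Q₀`
into `2^d` congruent subcubes. -/
def IsDyadicSubcube {d : ℕ} (Q₀ Q : Cube d) : Prop :=
  ∃ (k : ℕ) (m : Fin d → ℕ), (∀ i, m i < 2 ^ k) ∧ Q.l = Q₀.l / 2 ^ k ∧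
    ∀ i, Q.c i = Q₀.c i - Q₀.l / 2 + ((m i : ℝ) + 1 / 2) * (Q₀.l / 2 ^ k)
/-- A scalar Calderón–Zygmund operator on `ℝ^d` with Dini modulus of continuity:
a linear operator `T` bounded on `L²(ℝ^d)` associated with a kernel `K` satisfying the
size condition and the `ω`-smoothness condition, where `ω` is increasing, subadditive,
vanishes at `0`, and satisfies the Dini condition `∫₀¹ ω(t) dt/t < ∞`. -/
structure CZO (d : ℕ) where
  K : Rd d → Rd d → ℝ
  measK : Measurable (Function.uncurry K)
  ω : ℝ → ℝ
  Cst : ℝ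
  hCst : 0 < Cst
  ω_mono : MonotoneOn ω (Set.Ici 0)
  ω_zero : ω 0 = 0
  ω_subadd : ∀ s t : ℝ, 0 ≤ s → 0 ≤ t → ω (s + t) ≤ ω s + ω t
  dini : IntegrableOn (fun t => ω t / t) (Set.Ioo (0 : ℝ) 1)
  size : ∀ x y : Rd d, x ≠ y → |K x y| ≤ Cst / dist x y ^ d
  smooth : ∀ x x' y : Rd d, x ≠ y → dist x x' ≤ dist x y / 2 →
    |K x y - K x' y| + |K y x - K y x'| ≤ Cst * ω (dist x x' / dist x y) / dist x y ^ d
  T : Lp ℝ 2 (volume : Measure (Rd d)) →L[ℝ] Lp ℝ 2 (volume : Measure (Rd d))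
  assoc : ∀ f : Lp ℝ 2 (volume : Measure (Rd d)),
    ∀ᵐ x ∂(volume : Measure (Rd d)), x ∉ tsupport (f : Rd d → ℝ) →
      (T f : Rd d → ℝ) x = ∫ y, K x y * f y

/-- The truncated singular integral `T_ε f(x) = ∫_{|x-y|>ε} K(x,y) f(y) dy`. -/
def CZO.trunc {d : ℕ} (S : CZO d) (ε : ℝ) (f : Rd d → ℝ) (x : Rd d) : ℝ :=
  ∫ y in {y : Rd d | ε < dist x y}, S.K x y * f y

/-- The variation operator `V_ρ(T_* f)(x)`, with values in `[0,∞]`: the supremum over all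
strictly decreasing positive sequences `ε_i → 0` of `(Σ_i |T_{ε_{i+1}}f(x) - T_{ε_i}f(x)|^ρ)^{1/ρ}`. -/
def CZO.var {d : ℕ} (S : CZO d) (ρ : ℝ) (f : Rd d → ℝ) (x : Rd d) : ℝ≥0∞ :=
  ⨆ (ε : ℕ → ℝ) (_ : StrictAnti ε ∧ (∀ i, 0 < ε i) ∧ Tendsto ε atTop (nhds 0)),
    (∑' i : ℕ, ENNReal.ofReal |S.trunc (ε (i + 1)) f x - S.trunc (ε i) f x| ^ ρ) ^ (1 / ρ)

/-- `V_ρ(T_*)` is bounded on `L^q(ℝ^d)`. -/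
def CZO.VarBdd {d : ℕ} (S : CZO d) (ρ q : ℝ) : Prop :=
  ∃ A : ℝ, 0 < A ∧ ∀ f : Rd d → ℝ, Measurable f →
    ∫⁻ x, S.var ρ f x ^ q ∂volume ≤ ENNReal.ofReal A * ∫⁻ x, ENNReal.ofReal |f x| ^ q ∂volume

/-- The weak `(1,1)` operator (quasi-)norm `‖V_ρ(T_*)‖_{L¹ → L^{1,∞}}`. -/
def CZO.weak11Norm {d : ℕ} (S : CZO d) (ρ : ℝ) : ℝ≥0∞ :=
  sInf {A : ℝ≥0∞ | ∀ f : Rd d → ℝ, Measurable f → ∀ t : ℝ, 0 < t →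
    ENNReal.ofReal t * volume {x | ENNReal.ofReal t < S.var ρ f x} ≤
      A * ∫⁻ x, ENNReal.ofReal |f x| ∂volume}

/-- The local grand maximal truncated operator `M_{V_ρ(T_*),Q₀}`. -/
def CZO.grandMaxLoc {d : ℕ} (S : CZO d) (ρ : ℝ) (Q₀ : Cube d) (f : Rd d → ℝ) (x : Rd d) : ℝ≥0∞ :=
  if x ∈ Q₀.set then
    ⨆ (Q : Cube d) (_ : x ∈ Q.set ∧ Q.set ⊆ Q₀.set),
      essSup (fun ξ => S.var ρ ((Q₀.dilate 3 \ Q.dilate 3).indicator f) ξ)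
        (volume.restrict Q.set)
  else 0

/-- The (global) grand maximal truncated operator `M_{V_ρ(T_*)}`. -/
def CZO.grandMax {d : ℕ} (S : CZO d) (ρ : ℝ) (f : Rd d → ℝ) (x : Rd d) : ℝ≥0∞ :=
  ⨆ (Q : Cube d) (_ : x ∈ Q.set),
    essSup (fun ξ => S.var ρ (((Q.dilate 3)ᶜ).indicator f) ξ) (volume.restrict Q.set)

/-- The Hardy–Littlewood maximal operator over cubes, with values in `[0,∞]`. -/
def maxCube {d : ℕ} (f : Rd d → ℝ) (x : Rd d) : ℝ≥0∞ :=
  ⨆ (Q : Cube d) (_ : x ∈ Q.set), Q.vol⁻¹ * ∫⁻ y in Q.set, ENNReal.ofReal |f y|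

/-- The average `⟨|f|⟩_{3Q} = (1/|3Q|) ∫_{3Q} |f|`. -/
def avg3 {d : ℕ} (Q : Cube d) (f : Rd d → ℝ) : ℝ :=
  (∫ y in Q.dilate 3, |f y|) / (3 * Q.l) ^ d
/-- The Euclidean norm of a vector in `ℝ^n`. -/
def enorm' {n : ℕ} (v : Fin n → ℝ) : ℝ := Real.sqrt (∑ i, v i ^ 2)

/-- The operator norm (with respect to Euclidean norms) of an `n × n` real matrix. -/
def matOpNorm {n : ℕ} (A : Matrix (Fin n) (Fin n) ℝ) : ℝ :=
  sSup ((fun v => enorm' (A.mulVec v)) '' {v | enorm' v ≤ 1})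

/-- The spectral power `A^s` of a symmetric matrix `A = U D Uᵗ`, defined as `U D^s Uᵗ`
(junk value `A` if `A` is not symmetric). -/
def Matrix.rpowH {n : ℕ} (A : Matrix (Fin n) (Fin n) ℝ) (s : ℝ) : Matrix (Fin n) (Fin n) ℝ :=
  if h : A.IsHermitian then
    (h.eigenvectorUnitary : Matrix (Fin n) (Fin n) ℝ) *
      Matrix.diagonal (fun i => h.eigenvalues i ^ s) *
      star (h.eigenvectorUnitary : Matrix (Fin n) (Fin n) ℝ)
  else A

/-- A matrix weight on `ℝ^d`: a measurable function with a.e. symmetric positive definite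
values whose operator norm is locally integrable. -/
structure MatrixWeight (d n : ℕ) where
  W : Rd d → Matrix (Fin n) (Fin n) ℝ
  meas : ∀ i j, Measurable fun x => W x i j
  pd : ∀ᵐ x : Rd d, (W x).PosDef
  locInt : LocallyIntegrable (fun x => matOpNorm (W x)) (volume : Measure (Rd d))

/-- The matrix `A_p` characteristic `[W]_{A_p}`. -/
def MatrixWeight.apConst {d n : ℕ} (W : MatrixWeight d n) (p : ℝ) : ℝ≥0∞ :=
  ⨆ Q : Cube d, Q.vol⁻¹ * ∫⁻ x in Q.set,
    (Q.vol⁻¹ * ∫⁻ t in Q.set,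
        ENNReal.ofReal (matOpNorm ((W.W x).rpowH (1 / p) * (W.W t).rpowH (-(1 / p))))
          ^ (p / (p - 1))) ^ (p - 1)

/-- The norm of `f` in `L^p(W)`. -/
def MatrixWeight.wNorm {d n : ℕ} (W : MatrixWeight d n) (p : ℝ)
    (f : Rd d → Fin n → ℝ) : ℝ≥0∞ :=
  (∫⁻ x, ENNReal.ofReal (enorm' (((W.W x).rpowH (1 / p)).mulVec (f x))) ^ p) ^ (1 / p)

/-- The Euclidean length `|V_ρ(T_{n,*} f⃗)(x)|` of the componentwise variation vector
(with values in `[0,∞]`). -/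
def CZO.varVecNorm {d : ℕ} (n : ℕ) (S : CZO d) (ρ : ℝ) (f : Rd d → Fin n → ℝ)
    (x : Rd d) : ℝ≥0∞ :=
  (∑ j : Fin n, S.var ρ (fun y => f y j) x ^ (2 : ℝ)) ^ ((1 : ℝ) / 2)

/-- An `η`-sparse family of cubes. -/
def IsSparse {d : ℕ} (η : ℝ) (F : Set (Cube d)) : Prop :=
  ∃ E : Cube d → Set (Rd d),
    (∀ Q ∈ F, E Q ⊆ Q.set ∧ MeasurableSet (E Q) ∧ ENNReal.ofReal η * Q.vol ≤ volume (E Q)) ∧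
    F.PairwiseDisjoint E

/-- The convex body average `⟨⟨f⃗⟩⟩_{tQ}` of a vector-valued function over the cube `tQ`. -/
def convexBodyAvg {d n : ℕ} (f : Rd d → Fin n → ℝ) (Q : Cube d) (t : ℝ) :
    Set (Fin n → ℝ) :=
  {v | ∃ φ : Rd d → ℝ, Measurable φ ∧ (∀ y, |φ y| ≤ 1) ∧
    ∀ j, v j = (∫ y in Q.dilate t, φ y * f y j) / (t * Q.l) ^ d}

lemma lp_minkowski {ι : Type*} (p : ℝ) (hp : 1 ≤ p) (f g : ι → ℝ≥0∞) :
    (∑' i, (f i + g i) ^ p) ^ (1 / p) ≤ (∑' i, f i ^ p) ^ (1 / p) + (∑' i, g i ^ p) ^ (1 / p) := by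
  let _ : MeasurableSpace ι := ⊤
  have h := ENNReal.lintegral_Lp_add_le (μ := Measure.count) (f := f) (g := g)
    (measurable_from_top).aemeasurable (measurable_from_top).aemeasurable hp
  rw [lintegral_count, lintegral_count, lintegral_count] at h
  exact h

lemma lp_le_l1 {ι : Type*} (p : ℝ) (hp : 1 ≤ p) (f : ι → ℝ≥0∞) :
    (∑' i, f i ^ p) ^ (1 / p) ≤ ∑' i, f i := by
  have hp0 : 0 < p := by linarith
  set s := ∑' i, f i with hs
  rw [one_div, ENNReal.rpow_inv_le_iff hp0]
  have h1 : ∀ i, f i ^ p ≤ s ^ (p - 1) * f i := by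
    intro i
    have : f i ^ p = f i ^ (p - 1) * f i := by
      conv_rhs => rw [← ENNReal.rpow_one (f i), ← ENNReal.rpow_mul, one_mul]
      rw [← ENNReal.rpow_add_of_nonneg _ _ (by linarith) zero_le_one]
      congr 1; ring
    rw [this]
    gcongr
    exact ENNReal.le_tsum i
  calc ∑' i, f i ^ p ≤ ∑' i, s ^ (p - 1) * f i := ENNReal.tsum_le_tsum h1
    _ = s ^ (p - 1) * s := by rw [ENNReal.tsum_mul_left]
    _ = s ^ p := by
      conv_lhs => rw [← ENNReal.rpow_one s, ← ENNReal.rpow_mul, one_mul]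
      rw [← ENNReal.rpow_add_of_nonneg _ _ (by linarith) zero_le_one]
      congr 1; ring

lemma lp_le_l2 {ι : Type*} (p : ℝ) (hp : 2 ≤ p) (f : ι → ℝ≥0∞) :
    (∑' i, f i ^ p) ^ (1 / p) ≤ (∑' i, f i ^ 2) ^ (1 / 2 : ℝ) := by
  have h := lp_le_l1 (p / 2) (by linarith) (fun i => f i ^ 2)
  have h2 : ∀ i, (f i ^ 2) ^ (p / 2) = f i ^ p := by
    intro i
    rw [← ENNReal.rpow_natCast, ← ENNReal.rpow_mul]
    congr 1; push_cast; ring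
  simp only [h2] at h
  calc (∑' i, f i ^ p) ^ (1 / p) = ((∑' i, f i ^ p) ^ (1 / (p / 2))) ^ (1 / 2 : ℝ) := by
        rw [← ENNReal.rpow_mul]; congr 1; field_simp
    _ ≤ _ := by gcongr

lemma cs_tsum {ι : Type*} (β p q : ι → ℝ≥0∞) (h : ∀ j, β j ^ 2 ≤ p j * q j) :
    (∑' j, β j) ^ 2 ≤ (∑' j, p j) * (∑' j, q j) := by
  let _ : MeasurableSpace ι := ⊤
  have hh := ENNReal.lintegral_mul_le_Lp_mul_Lq (μ := Measure.count)
    (p := 2) (q := 2) (by constructor <;> norm_num)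
    (f := fun j => p j ^ (1 / 2 : ℝ)) (g := fun j => q j ^ (1 / 2 : ℝ))
    (measurable_from_top).aemeasurable (measurable_from_top).aemeasurable
  rw [lintegral_count, lintegral_count, lintegral_count] at hh
  have e : ∀ x : ℝ≥0∞, (x ^ (1 / 2 : ℝ)) ^ (2 : ℝ) = x := by
    intro x; rw [← ENNReal.rpow_mul]; norm_num
  simp only [e] at hh
  have h3 : ∑' j, β j ≤ (∑' j, p j) ^ (1 / 2 : ℝ) * (∑' j, q j) ^ (1 / 2 : ℝ) := by
    refine le_trans (ENNReal.tsum_le_tsum fun j => ?_) hh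
    simp only [Pi.mul_apply]
    rw [← ENNReal.mul_rpow_of_nonneg _ _ (by norm_num)]
    rw [one_div, ENNReal.le_rpow_inv_iff (by norm_num)]
    exact_mod_cast h j
  calc (∑' j, β j) ^ 2 ≤ ((∑' j, p j) ^ (1 / 2 : ℝ) * (∑' j, q j) ^ (1 / 2 : ℝ)) ^ 2 := by gcongr
    _ = _ := by
      rw [mul_pow, ← ENNReal.rpow_natCast, ← ENNReal.rpow_natCast]
      push_cast
      rw [e, e]

/-- volume of the unit ball -/
def vB (d : ℕ) : ℝ≥0∞ := volume (Metric.ball (0 : Rd d) 1)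

lemma vB_pos (d : ℕ) : vB d ≠ 0 := (Metric.measure_ball_pos _ _ one_pos).ne'
lemma vB_top (d : ℕ) : vB d ≠ ⊤ := Metric.isBounded_ball.measure_lt_top.ne

lemma vol_cB {d : ℕ} (x : Rd d) {r : ℝ} (hr : 0 ≤ r) :
    volume (Metric.closedBall x r) = ENNReal.ofReal (r ^ d) * vB d := by
  rw [Measure.addHaar_closedBall _ _ hr]; simp [vB]

lemma vol_B {d : ℕ} (x : Rd d) {r : ℝ} (hr : 0 < r) :
    volume (Metric.ball x r) = ENNReal.ofReal (r ^ d) * vB d := by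
  rw [Measure.addHaar_ball_of_pos _ _ hr]; simp [vB]

/-- Dini sums. -/
def dsum (φ : ℝ → ℝ) : ℝ≥0∞ := ∑' k : ℕ, ENNReal.ofReal (φ ((1 / 2) ^ (k + 1)))

lemma annuli {d : ℕ} (φ : ℝ → ℝ) (hφ : MonotoneOn φ (Ici 0)) (c : Rd d) (l : ℝ) (hl : 0 < l) :
    ∫⁻ x in {x : Rd d | 2 * l ≤ dist x c},
      ENNReal.ofReal (φ (l / dist x c)) * ENNReal.ofReal ((1 / dist x c) ^ d)
      ≤ ENNReal.ofReal (2 ^ d) * vB d * dsum φ := by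
  have hm : MeasurableSet {x : Rd d | 2 * l ≤ dist x c} :=
    measurableSet_le measurable_const (by fun_prop)
  let G : ℕ → Rd d → ℝ≥0∞ := fun k => (Metric.closedBall c (2 ^ (k + 2) * l)).indicator fun _ =>
    ENNReal.ofReal (φ ((1 / 2) ^ (k + 1))) * ENNReal.ofReal ((1 / (2 ^ (k + 1) * l)) ^ d)
  calc _ ≤ ∫⁻ x in {x : Rd d | 2 * l ≤ dist x c}, ∑' k, G k x := by
        refine setLIntegral_mono' hm fun x hx => ?_
        have hx' : 2 * l ≤ dist x c := hx
        obtain ⟨k, hk1, hk2⟩ := exists_nat_pow_near (x := dist x c / (2 * l)) (y := (2:ℝ))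
          (by rw [le_div_iff₀ (by positivity)]; linarith) one_lt_two
        rw [le_div_iff₀ (by positivity)] at hk1
        rw [div_lt_iff₀ (by positivity)] at hk2
        have hk1' : 2 ^ (k + 1) * l ≤ dist x c := by rw [pow_succ]; linarith
        have hk2' : dist x c ≤ 2 ^ (k + 2) * l := by rw [pow_succ]; linarith
        refine le_trans ?_ (ENNReal.le_tsum k)
        have hd0 : 0 < dist x c := by linarith
        simp only [G]
        rw [indicator_of_mem (by simpa using hk2')]
        gcongr
        refine hφ (mem_Ici.2 (by positivity)) (mem_Ici.2 (by positivity)) ?_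
        rw [div_le_iff₀ hd0, one_div, inv_pow, ← div_eq_inv_mul, le_div_iff₀ (by positivity)]
        linarith
    _ ≤ ∫⁻ x, ∑' k, G k x := setLIntegral_le_lintegral _ _
    _ = ∑' k, ∫⁻ x, G k x := by
        refine lintegral_tsum fun k => ?_
        exact (measurable_const.indicator Metric.isClosed_closedBall.measurableSet).aemeasurable
    _ = ∑' k, ENNReal.ofReal (2 ^ d) * vB d * ENNReal.ofReal (φ ((1 / 2) ^ (k + 1))) := by
        congr 1; ext k
        simp only [G]
        rw [lintegral_indicator Metric.isClosed_closedBall.measurableSet, setLIntegral_const,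
          vol_cB _ (by positivity)]
        have : ENNReal.ofReal ((1 / (2 ^ (k + 1) * l)) ^ d) * ENNReal.ofReal ((2 ^ (k + 2) * l) ^ d)
            = ENNReal.ofReal (2 ^ d) := by
          rw [← ENNReal.ofReal_mul (by positivity), ← mul_pow]
          congr 2; field_simp; ring
        rw [← this]; ring
    _ = _ := by rw [ENNReal.tsum_mul_left]; rfl

lemma dsum_dini {d : ℕ} (S : CZO d) : dsum S.ω ≠ ⊤ := by
  have h0 : ∀ t, 0 ≤ t → 0 ≤ S.ω t := fun t ht => by
    have := S.ω_mono (mem_Ici.2 le_rfl) (mem_Ici.2 ht) ht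
    rwa [S.ω_zero] at this
  have hfin : ∫⁻ t in Ioo (0:ℝ) 1, ENNReal.ofReal (S.ω t / t) < ⊤ := by
    have := S.dini.lintegral_lt_top
    exact this
  let I : ℕ → Set ℝ := fun k => Ioo ((1 / 2 : ℝ) ^ (k + 1)) ((1 / 2) ^ k)
  have hI : Pairwise (Function.onFun Disjoint I) := by
    intro i j hij
    wlog h : i < j generalizing i j
    · exact (this hij.symm (by omega)).symm
    refine Set.disjoint_left.2 fun t ht1 ht2 => ?_
    have : ((1:ℝ) / 2) ^ j ≤ (1 / 2) ^ (i + 1) :=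
      pow_le_pow_of_le_one (by norm_num) (by norm_num) h
    have := ht1.1
    have := ht2.2
    linarith
  have key : ∀ k, ENNReal.ofReal (S.ω ((1 / 2) ^ (k + 1))) ≤
      2 * ∫⁻ t in I k, ENNReal.ofReal (S.ω t / t) := by
    intro k
    have : ∫⁻ t in I k, ENNReal.ofReal (S.ω ((1 / 2) ^ (k + 1)) / (1 / 2) ^ k) ≤
        ∫⁻ t in I k, ENNReal.ofReal (S.ω t / t) := by
      refine setLIntegral_mono' measurableSet_Ioo fun t ht => ?_
      have ht0 : 0 < t := lt_trans (by positivity) ht.1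
      have hm := S.ω_mono (mem_Ici.2 (by positivity)) (mem_Ici.2 ht0.le) ht.1.le
      have := ht.2.le
      have := h0 t ht0.le
      gcongr
    rw [setLIntegral_const, Real.volume_Ioo] at this
    refine le_trans ?_ (mul_le_mul_right this 2)
    rw [← ENNReal.ofReal_mul (div_nonneg (h0 _ (by positivity)) (by positivity)),
      ← ENNReal.ofReal_ofNat, ← ENNReal.ofReal_mul (by norm_num)]
    apply ENNReal.ofReal_le_ofReal
    apply le_of_eq
    rw [pow_succ]
    field_simp
    ring
  have : dsum S.ω ≤ 2 * ∫⁻ t in Ioo (0:ℝ) 1, ENNReal.ofReal (S.ω t / t) := by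
    calc dsum S.ω ≤ ∑' k, 2 * ∫⁻ t in I k, ENNReal.ofReal (S.ω t / t) :=
          ENNReal.tsum_le_tsum key
      _ = 2 * ∫⁻ t in ⋃ k, I k, ENNReal.ofReal (S.ω t / t) := by
          rw [ENNReal.tsum_mul_left, lintegral_iUnion (fun k => measurableSet_Ioo) hI]
      _ ≤ _ := by
          gcongr
          refine iUnion_subset fun k t ht => ⟨lt_trans (by positivity) ht.1, lt_of_lt_of_le ht.2 ?_⟩
          exact pow_le_one₀ (by norm_num) (by norm_num)
  exact (lt_of_le_of_lt this (ENNReal.mul_lt_top (by simp) hfin)).ne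

lemma sqrt_half_lt : √(1 / 2 : ℝ) < 1 := by
  rw [Real.sqrt_lt' one_pos]; norm_num

lemma dsum_sqrt : dsum Real.sqrt ≠ ⊤ := by
  unfold dsum
  have : ∀ k : ℕ, √((1 / 2 : ℝ) ^ (k + 1)) = √(1 / 2) * √(1 / 2) ^ k := by
    intro k
    rw [← pow_succ']
    rw [Real.sqrt_eq_iff_mul_self_eq (by positivity) (by positivity), ← mul_pow,
      Real.mul_self_sqrt (by norm_num)]
  simp only [this]
  have hs : Summable fun k : ℕ => √(1 / 2 : ℝ) * √(1 / 2) ^ k :=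
    (summable_geometric_of_lt_one (by positivity) sqrt_half_lt).mul_left _
  exact hs.tsum_ofReal_ne_top

lemma pow_sub_pow_bd (n : ℕ) (a b : ℝ) (hb : 0 ≤ b) (hab : b ≤ a) (ha : a ≤ 3) :
    a ^ n - b ^ n ≤ n * (a - b) * 3 ^ n := by
  induction n with
  | zero => simp
  | succ n ih =>
    have e : a ^ (n + 1) - b ^ (n + 1) = a * (a ^ n - b ^ n) + (a - b) * b ^ n := by ring
    have h1 : a * (a ^ n - b ^ n) ≤ 3 * (n * (a - b) * 3 ^ n) := by
      have : 0 ≤ a ^ n - b ^ n := sub_nonneg.2 (pow_le_pow_left₀ hb hab n)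
      nlinarith
    have h2 : (a - b) * b ^ n ≤ (a - b) * 3 ^ n := by
      have : b ≤ 3 := by linarith
      have : 0 ≤ a - b := by linarith
      gcongr
    have h3 : 0 ≤ (a - b) * 3 ^ n := mul_nonneg (by linarith) (by positivity)
    rw [e]; push_cast; rw [pow_succ]; nlinarith

lemma shell_vol {d : ℕ} (hd : 0 < d) (x : Rd d) (ε h : ℝ) (hε : 0 < ε) (h0 : 0 ≤ h) (h2 : h ≤ 2) :
    volume {y : Rd d | |dist x y - ε| ≤ h * ε} ≤
      ENNReal.ofReal (2 * d * 3 ^ d * h * ε ^ d) * vB d := by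
  have hd1 : (1:ℝ) ≤ d := by exact_mod_cast hd
  have hsub : {y : Rd d | |dist x y - ε| ≤ h * ε} ⊆ Metric.closedBall x ((1 + h) * ε) := by
    intro y hy
    have := (abs_le.1 (show |dist x y - ε| ≤ h * ε from hy)).2
    rw [Metric.mem_closedBall']; linarith
  rcases lt_or_ge h 1 with h1 | h1
  · have hsub2 : {y : Rd d | |dist x y - ε| ≤ h * ε} ⊆
        Metric.closedBall x ((1 + h) * ε) \ Metric.ball x ((1 - h) * ε) := by
      intro y hy
      refine ⟨hsub hy, fun hy2 => ?_⟩
      have := (abs_le.1 (show |dist x y - ε| ≤ h * ε from hy)).1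
      rw [Metric.mem_ball'] at hy2; linarith
    have hp : 0 < (1 - h) * ε := mul_pos (by linarith) hε
    refine (measure_mono hsub2).trans ?_
    rw [measure_sdiff _ Metric.isOpen_ball.measurableSet.nullMeasurableSet
      Metric.isBounded_ball.measure_lt_top.ne, vol_cB _ (by positivity), vol_B _ hp,
      ← ENNReal.sub_mul (fun _ _ => vB_top d), ← ENNReal.ofReal_sub _ (by positivity)]
    · gcongr
      have := pow_sub_pow_bd d (1 + h) (1 - h) (by linarith) (by linarith) (by linarith)
      have he : 0 ≤ ε ^ d := by positivity
      rw [mul_pow, mul_pow, ← sub_mul]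
      nlinarith
    · exact Metric.ball_subset_closedBall.trans (Metric.closedBall_subset_closedBall (by nlinarith))
  · refine (measure_mono hsub).trans ?_
    rw [vol_cB _ (by positivity)]
    gcongr
    rw [mul_pow]
    have : (1 + h) ^ d ≤ 3 ^ d := by gcongr; linarith
    have h3 : (3:ℝ) ^ d ≤ 2 * d * 3 ^ d * h := by
      have : (0:ℝ) < 3 ^ d := by positivity
      have : 1 ≤ 2 * d * h := by nlinarith
      nlinarith
    gcongr
    linarith

def CS (d : ℕ) : ℝ≥0∞ :=
  ∑' k : ℕ, ENNReal.ofReal ((3 / 2) ^ d * (√(1 / 2))⁻¹ ^ (k + 2) * (2 * d * 3 ^ d * (2 * (1 / 2) ^ k)))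
    * vB d

lemma CS_top (d : ℕ) : CS d ≠ ⊤ := by
  unfold CS
  rw [ENNReal.tsum_mul_right]
  refine ENNReal.mul_ne_top ?_ (vB_top d)
  have : ∀ k : ℕ, (3 / 2 : ℝ) ^ d * (√(1 / 2))⁻¹ ^ (k + 2) * (2 * d * 3 ^ d * (2 * (1 / 2) ^ k)) =
      ((3 / 2) ^ d * (2 * d * 3 ^ d) * 4) * √(1 / 2) ^ k := by
    intro k
    have hs : (0:ℝ) < √(1 / 2) := by positivity
    have e : √(1 / 2 : ℝ) ^ 2 = 1 / 2 := Real.sq_sqrt (by norm_num)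
    have e2 : (1 / 2 : ℝ) ^ k = √(1 / 2) ^ k * √(1 / 2) ^ k := by
      rw [← mul_pow, ← sq, e]
    rw [e2, pow_add, inv_pow, inv_pow, e]
    field_simp
    ring
  simp only [this]
  exact ((summable_geometric_of_lt_one (by positivity) sqrt_half_lt).mul_left _).tsum_ofReal_ne_top

lemma shell_sum {d : ℕ} (hd : 0 < d) {ι : Type*} [Countable ι] (c : ι → Rd d) (l : ι → ℝ)
    (B : ι → Set (Rd d)) (hl : ∀ j, 0 < l j) (hBm : ∀ j, MeasurableSet (B j))
    (hBd : Pairwise (Function.onFun Disjoint B)) (hBs : ∀ j, B j ⊆ Metric.closedBall (c j) (l j))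
    (x : Rd d) (ε : ℝ) (hε : 0 < ε) (J : Set ι)
    (hJ : ∀ j ∈ J, 2 * l j ≤ dist x (c j) ∧ |dist x (c j) - ε| ≤ l j) :
    ∑' j, J.indicator (fun j => ENNReal.ofReal ((1 / dist x (c j)) ^ d *
      (√(l j / dist x (c j)))⁻¹) * volume (B j)) j ≤ CS d := by
  have hs : (0:ℝ) < √(1 / 2) := by positivity
  let Jk : ℕ → Set ι := fun k => {j | j ∈ J ∧ l j / dist x (c j) ≤ (1 / 2) ^ (k + 1)}
  let cst : ℕ → ℝ≥0∞ := fun k => ENNReal.ofReal ((3 / 2 / ε) ^ d * (√(1 / 2))⁻¹ ^ (k + 2))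
  have hterm : ∀ j, J.indicator (fun j => ENNReal.ofReal ((1 / dist x (c j)) ^ d *
      (√(l j / dist x (c j)))⁻¹) * volume (B j)) j ≤
      ∑' k, cst k * (Jk k).indicator (fun j => volume (B j)) j := by
    intro j
    by_cases hj : j ∈ J
    swap
    · simp [hj]
    rw [indicator_of_mem hj]
    obtain ⟨h1, h2⟩ := hJ j hj
    have hlj := hl j
    have hr : 0 < dist x (c j) := by linarith
    have hr2 : 2 / 3 * ε ≤ dist x (c j) := by
      have := (abs_le.1 h2).1; linarith
    obtain ⟨k, hk1, hk2⟩ := exists_nat_pow_near_of_lt_one (x := 2 * (l j / dist x (c j)))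
      (y := (1 / 2 : ℝ)) (by positivity) (by
        rw [← mul_div_assoc, div_le_one hr]; exact h1) (by norm_num) (by norm_num)
    refine le_trans ?_ (ENNReal.le_tsum k)
    have hmem : j ∈ Jk k := ⟨hj, by rw [pow_succ]; linarith⟩
    rw [indicator_of_mem hmem]
    simp only [cst]
    have hA : 1 / dist x (c j) ≤ 3 / 2 / ε := by
      rw [div_div, div_le_div_iff₀ hr (by positivity)]; linarith
    have hB : (√(l j / dist x (c j)))⁻¹ ≤ (√(1 / 2))⁻¹ ^ (k + 2) := by
      have : (√(1 / 2 : ℝ)) ^ (k + 2) ≤ √(l j / dist x (c j)) := by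
        apply Real.le_sqrt_of_sq_le
        rw [← pow_mul, mul_comm, pow_mul, Real.sq_sqrt (by norm_num), pow_succ]
        linarith
      rw [inv_pow]
      exact inv_anti₀ (by positivity) this
    have := mul_le_mul (pow_le_pow_left₀ (by positivity) hA d) hB (by positivity) (by positivity)
    gcongr
  calc _ ≤ ∑' j, ∑' k, cst k * (Jk k).indicator (fun j => volume (B j)) j :=
        ENNReal.tsum_le_tsum hterm
    _ = ∑' k, cst k * ∑' j, (Jk k).indicator (fun j => volume (B j)) j := by
        rw [ENNReal.tsum_comm]; simp only [ENNReal.tsum_mul_left]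
    _ ≤ CS d := by
        refine ENNReal.tsum_le_tsum fun k => ?_
        have hle : ∑' j, (Jk k).indicator (fun j => volume (B j)) j ≤
            ENNReal.ofReal (2 * d * 3 ^ d * (2 * (1 / 2) ^ k) * ε ^ d) * vB d := by
          refine le_trans ?_ (shell_vol hd x ε (2 * (1 / 2) ^ k) hε (by positivity) ?_)
          · rw [← tsum_subtype]
            rw [← measure_iUnion (f := fun j : Jk k => B j)]
            · refine measure_mono (iUnion_subset ?_)
              rintro ⟨j, hj, hjk⟩ y hy
              obtain ⟨h1, h2⟩ := hJ j hj
              have hlj := hl j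
              have hr : 0 < dist x (c j) := by linarith
              have hr2 : dist x (c j) ≤ 2 * ε := by
                have := (abs_le.1 h2).2; linarith
              have hy' : dist y (c j) ≤ l j := hBs j hy
              have t : |dist x y - dist x (c j)| ≤ l j := by
                rw [dist_comm x y, dist_comm x (c j)]
                exact (abs_dist_sub_le y (c j) x).trans hy'
              rw [div_le_iff₀ hr, pow_succ] at hjk
              have hp : (0:ℝ) < (1 / 2) ^ k := by positivity
              have : l j ≤ (1 / 2) ^ k * ε := by nlinarith
              show |dist x y - ε| ≤ _
              have e : dist x y - ε = (dist x y - dist x (c j)) + (dist x (c j) - ε) := by ring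
              rw [e]
              refine (abs_add_le _ _).trans ?_
              linarith
            · intro a b hab
              exact hBd (fun h => hab (Subtype.ext h))
            · exact fun j => hBm j
          · have : (1 / 2 : ℝ) ^ k ≤ 1 := pow_le_one₀ (by norm_num) (by norm_num)
            linarith
        refine (mul_le_mul_right hle _).trans ?_
        rw [← mul_assoc]
        simp only [cst]
        rw [← ENNReal.ofReal_mul (by positivity)]
        refine mul_le_mul_left (ENNReal.ofReal_le_ofReal (le_of_eq ?_)) _
        rw [div_pow _ ε]
        field_simp

lemma CZO.measK_right {d : ℕ} (S : CZO d) (x : Rd d) : Measurable (S.K x) :=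
  S.measK.comp (measurable_const.prodMk measurable_id)

lemma meas_outer {d : ℕ} (x : Rd d) (ε : ℝ) : MeasurableSet {y : Rd d | ε < dist x y} :=
  measurableSet_lt measurable_const (by fun_prop)

lemma CZO.K_bd {d : ℕ} (S : CZO d) (x y : Rd d) (ε : ℝ) (hε : 0 < ε) (h : ε ≤ dist x y) :
    |S.K x y| ≤ S.Cst / ε ^ d := by
  have hne : x ≠ y := by
    rintro rfl
    simp at h; linarith
  refine (S.size x y hne).trans ?_
  have := S.hCst
  gcongr

lemma CZO.integrableOn_K {d : ℕ} (S : CZO d) (f : Rd d → ℝ) (hf : Integrable f volume) (x : Rd d)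
    (ε : ℝ) (hε : 0 < ε) :
    IntegrableOn (fun y => S.K x y * f y) {y | ε < dist x y} volume := by
  refine Integrable.mono' ((hf.abs.const_mul (S.Cst / ε ^ d)).integrableOn)
    ((S.measK_right x).aestronglyMeasurable.mul hf.aestronglyMeasurable.restrict) ?_
  refine (ae_restrict_iff' (meas_outer x ε)).2 (Eventually.of_forall fun y hy => ?_)
  rw [Real.norm_eq_abs, abs_mul]
  exact mul_le_mul_of_nonneg_right (S.K_bd x y ε hε (le_of_lt hy)) (abs_nonneg _)

lemma CZO.trunc_sub {d : ℕ} (S : CZO d) (f : Rd d → ℝ) (hf : Integrable f volume) (x : Rd d)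
    (ε ε' : ℝ) (hε : 0 < ε) (h : ε < ε') :
    S.trunc ε f x - S.trunc ε' f x = ∫ y in {y | ε < dist x y ∧ dist x y ≤ ε'}, S.K x y * f y := by
  unfold CZO.trunc
  have hsub : {y : Rd d | ε' < dist x y} ⊆ {y | ε < dist x y} := fun y hy => lt_trans h hy
  rw [← setIntegral_sdiff (meas_outer x ε') (S.integrableOn_K f hf x ε hε) hsub]
  congr 2
  ext y; simp [not_lt]

lemma CZO.trunc_cont {d : ℕ} (hd : 0 < d) (S : CZO d) (f : Rd d → ℝ) (hf : Integrable f volume)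
    (x : Rd d) (ε : ℝ) (hε : 0 < ε) : ContinuousAt (fun e => S.trunc e f x) ε := by
  have : Nonempty (Fin d) := ⟨⟨0, hd⟩⟩
  unfold CZO.trunc
  simp_rw [← integral_indicator (meas_outer x _)]
  have hbi := S.integrableOn_K f hf x (ε / 2) (by positivity)
  refine continuousAt_of_dominated
    (bound := {y | ε / 2 < dist x y}.indicator fun y => ‖S.K x y * f y‖) ?_ ?_ ?_ ?_
  · refine Eventually.of_forall fun e => ?_
    exact ((S.measK_right x).aestronglyMeasurable.mul hf.aestronglyMeasurable).indicator
      (meas_outer x e)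
  · filter_upwards [lt_mem_nhds (show ε / 2 < ε by linarith)] with e he
    refine Eventually.of_forall fun y => ?_
    rw [norm_indicator_eq_indicator_norm]
    exact indicator_le_indicator_of_subset (fun y hy => lt_trans he hy) (fun _ => norm_nonneg _) y
  · exact (integrable_indicator_iff (meas_outer x _)).2 hbi.norm
  · have hs : volume (Metric.sphere x ε) = 0 := Measure.addHaar_sphere _ _ _
    filter_upwards [measure_eq_zero_iff_ae_notMem.1 hs] with y hy
    have hy' : dist x y ≠ ε := fun h => hy (by rw [Metric.mem_sphere']; exact h)
    rcases lt_or_gt_of_ne hy' with h | h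
    · refine (continuousAt_const (y := (0:ℝ))).congr ?_
      filter_upwards [lt_mem_nhds h] with e he
      rw [indicator_of_notMem]; simp [he.le]
    · refine (continuousAt_const (y := S.K x y * f y)).congr ?_
      filter_upwards [gt_mem_nhds h] with e he
      rw [indicator_of_mem]; exact he

lemma CZO.trunc_meas {d : ℕ} (S : CZO d) (f : Rd d → ℝ) (hf : Measurable f) (ε : ℝ) :
    Measurable fun x => S.trunc ε f x := by
  unfold CZO.trunc
  simp_rw [← integral_indicator (meas_outer _ ε)]
  refine (StronglyMeasurable.integral_prod_right
    (f := fun x y => {y | ε < dist x y}.indicator (fun y => S.K x y * f y) y) ?_).measurable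
  have : Function.uncurry (fun x y => {y | ε < dist x y}.indicator (fun y => S.K x y * f y) y) =
      {p : Rd d × Rd d | ε < dist p.1 p.2}.indicator
        (fun p => Function.uncurry S.K p * f p.2) := by
    ext ⟨x, y⟩; simp [indicator, Function.uncurry]
  rw [this]
  refine Measurable.stronglyMeasurable (Measurable.indicator ?_ ?_)
  · exact S.measK.mul (hf.comp measurable_snd)
  · exact measurableSet_lt measurable_const (by fun_prop)

lemma CZO.var_meas {d : ℕ} (hd : 0 < d) (S : CZO d) (ρ : ℝ) (hρ : 0 < ρ) (f : Rd d → ℝ)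
    (hfm : Measurable f) (hf : Integrable f volume) : Measurable fun x => S.var ρ f x := by
  let X := {ε : ℕ → ℝ // StrictAnti ε ∧ (∀ i, 0 < ε i) ∧ Tendsto ε atTop (nhds 0)}
  let t : X → Rd d → ℕ → ℝ≥0∞ := fun ε x i =>
    ENNReal.ofReal |S.trunc (ε.1 (i + 1)) f x - S.trunc (ε.1 i) f x| ^ ρ
  have hX2 : SecondCountableTopology X := TopologicalSpace.Subtype.secondCountableTopology _
  have hX : TopologicalSpace.SeparableSpace X := inferInstance
  obtain ⟨D, hDc, hD⟩ := TopologicalSpace.exists_countable_dense X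
  have e : ∀ x, S.var ρ f x = ⨆ ε ∈ D, (∑' i, t ε x i) ^ (1 / ρ) := by
    intro x
    have e1 : S.var ρ f x = ⨆ ε : X, (∑' i, t ε x i) ^ (1 / ρ) := by
      unfold CZO.var; rw [iSup_subtype']
    rw [e1]
    refine le_antisymm (iSup_le fun ε => ?_) (iSup₂_le fun ε _ => le_iSup_of_le ε le_rfl)
    set M := ⨆ ε ∈ D, (∑' i, t ε x i) ^ (1 / ρ) with hM
    rw [one_div, ENNReal.rpow_inv_le_iff hρ]
    refine ENNReal.tsum_le_of_sum_range_le fun n => ?_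
    have hcl : IsClosed {ε : X | ∑ i ∈ Finset.range n, t ε x i ≤ M ^ ρ} := by
      refine isClosed_le ?_ continuous_const
      refine continuous_finsetSum _ fun i _ => ?_
      refine (ENNReal.continuous_rpow_const).comp (ENNReal.continuous_ofReal.comp ?_)
      refine continuous_abs.comp ?_
      have hc : ∀ i, Continuous fun ε : X => S.trunc (ε.1 i) f x := fun i => by
        refine continuous_iff_continuousAt.2 fun ε => ?_
        exact ContinuousAt.comp (g := fun e => S.trunc e f x) (f := fun ε : X => ε.1 i)
          (S.trunc_cont hd f hf x _ (ε.2.2.1 i))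
          (((continuous_apply i).comp continuous_subtype_val).continuousAt)
      exact (hc (i + 1)).sub (hc i)
    have hsub : D ⊆ {ε : X | ∑ i ∈ Finset.range n, t ε x i ≤ M ^ ρ} := by
      intro ε hε
      refine (ENNReal.sum_le_tsum _).trans ?_
      rw [← ENNReal.rpow_inv_le_iff hρ, ← one_div]
      exact le_iSup₂_of_le ε hε le_rfl
    exact (hcl.closure_subset_iff.2 hsub) (hD ε)
  simp_rw [e]
  refine Measurable.biSup D hDc fun ε _ => ?_
  refine Measurable.pow_const (Measurable.tsum fun i => ?_) _
  refine Measurable.pow_const (Measurable.ennreal_ofReal ?_) _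
  exact continuous_abs.measurable.comp ((S.trunc_meas f hfm _).sub (S.trunc_meas f hfm _))

def ann {d : ℕ} (x : Rd d) (ε ε' : ℝ) : Set (Rd d) := {y | ε < dist x y ∧ dist x y ≤ ε'}

lemma meas_ann {d : ℕ} (x : Rd d) (ε ε' : ℝ) : MeasurableSet (ann x ε ε') :=
  (meas_outer x ε).inter (measurableSet_le (f := fun y => dist x y) (by fun_prop) measurable_const)

lemma dist_dist_le {d : ℕ} {x y c : Rd d} {l : ℝ} (hy : y ∈ Metric.closedBall c l) :
    |dist x y - dist x c| ≤ l := by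
  rw [dist_comm x y, dist_comm x c]
  exact (abs_dist_sub_le y c x).trans hy

lemma enorm_int_mul_le {d : ℕ} (A : Set (Rd d)) (hA : MeasurableSet A) (k b : Rd d → ℝ) (a : ℝ)
    (h : ∀ y ∈ A, b y ≠ 0 → |k y| ≤ a) :
    ‖∫ y in A, k y * b y‖ₑ ≤ ENNReal.ofReal a * ∫⁻ y in A, ‖b y‖ₑ := by
  refine (enorm_integral_le_lintegral_enorm _).trans ?_
  rw [← lintegral_const_mul' _ _ ENNReal.ofReal_ne_top]
  refine setLIntegral_mono' hA fun y hy => ?_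
  rw [enorm_mul]
  by_cases hb : b y = 0
  · simp [hb]
  · gcongr
    rw [Real.enorm_eq_ofReal_abs]
    exact ENNReal.ofReal_le_ofReal (h y hy hb)

lemma CZO.piece {d : ℕ} (S : CZO d) (b : Rd d → ℝ) (hb : Integrable b volume) (c : Rd d) (l : ℝ)
    (hl : 0 < l) (hbs : ∀ y, y ∉ Metric.closedBall c l → b y = 0) (hb0 : ∫ y, b y = 0)
    (x : Rd d) (hx : 2 * l ≤ dist x c) (ε ε' : ℝ) (hε : 0 < ε) :
    ‖∫ y in ann x ε ε', S.K x y * b y‖ₑ ≤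
      (if |dist x c - ε'| ≤ l ∨ |dist x c - ε| ≤ l then
        ENNReal.ofReal (S.Cst * 2 ^ d) * ENNReal.ofReal ((1 / dist x c) ^ d)
      else ENNReal.ofReal S.Cst * (ENNReal.ofReal (S.ω (l / dist x c)) *
        ENNReal.ofReal ((1 / dist x c) ^ d))) * ∫⁻ y in ann x ε ε', ‖b y‖ₑ := by
  have hr : 0 < dist x c := by linarith
  have hC := S.hCst
  have hin : ∀ y, b y ≠ 0 → y ∈ Metric.closedBall c l := fun y hy => by
    by_contra h; exact hy (hbs y h)
  split_ifs with hbd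
  · rw [← ENNReal.ofReal_mul (by positivity)]
    refine enorm_int_mul_le _ (meas_ann x ε ε') _ _ _ fun y _ hy => ?_
    have := (abs_le.1 (dist_dist_le (x := x) (hin y hy))).1
    refine (S.K_bd x y (dist x c / 2) (by positivity) (by linarith)).trans (le_of_eq ?_)
    rw [div_pow, div_pow, one_pow]
    field_simp
  · push Not at hbd
    obtain ⟨h1, h2⟩ := hbd
    by_cases hA : ∀ y ∈ Metric.closedBall c l, y ∈ ann x ε ε'
    · have hcomp : ∀ y, y ∉ ann x ε ε' → b y = 0 := fun y hy => hbs y fun h => hy (hA y h)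
      have e0 : ∫ y in ann x ε ε', b y = 0 := by
        rw [setIntegral_eq_integral_of_forall_compl_eq_zero hcomp, hb0]
      have e1 : ∫ y in ann x ε ε', S.K x y * b y =
          ∫ y in ann x ε ε', (S.K x y - S.K x c) * b y := by
        have hi : IntegrableOn (fun y => S.K x y * b y) (ann x ε ε') volume :=
          (S.integrableOn_K b hb x ε hε).mono_set fun y hy => hy.1
        simp_rw [sub_mul]
        rw [integral_sub hi (hb.integrableOn.const_mul _), integral_const_mul, e0]
        simp
      rw [e1]
      have hω : 0 ≤ S.ω (l / dist x c) := by
        have := S.ω_mono (mem_Ici.2 le_rfl) (mem_Ici.2 (show 0 ≤ l / dist x c by positivity))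
          (by positivity)
        rwa [S.ω_zero] at this
      rw [← ENNReal.ofReal_mul hω, ← ENNReal.ofReal_mul hC.le]
      refine enorm_int_mul_le _ (meas_ann x ε ε') _ _ _ fun y _ hy => ?_
      have hy' : dist y c ≤ l := hin y hy
      have hcx : c ≠ x := by
        rintro rfl; simp at hr
      have hs := S.smooth c y x hcx (by rw [dist_comm c y, dist_comm c x]; linarith)
      have hs2 : |S.K x y - S.K x c| ≤ S.Cst * S.ω (dist c y / dist c x) / dist c x ^ d := by
        rw [abs_sub_comm]
        linarith [abs_nonneg (S.K c x - S.K y x)]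
      refine hs2.trans ?_
      rw [dist_comm c y, dist_comm c x, mul_div_assoc, div_eq_mul_one_div, ← one_div_pow]
      have : S.ω (dist y c / dist x c) ≤ S.ω (l / dist x c) :=
        S.ω_mono (mem_Ici.2 (by positivity)) (mem_Ici.2 (by positivity)) (by gcongr)
      have e3 : S.Cst * (S.ω (dist y c / dist x c) * (1 / dist x c) ^ d) ≤
        S.Cst * (S.ω (l / dist x c) * (1 / dist x c) ^ d) := by gcongr
      linarith
    · push Not at hA
      obtain ⟨y0, hy0, hy0A⟩ := hA
      have hz : ∀ y ∈ ann x ε ε', S.K x y * b y = 0 := by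
        intro y hy
        by_cases hb' : b y = 0
        · simp [hb']
        exfalso
        have d1 := abs_le.1 (dist_dist_le (x := x) (hin y hb'))
        have d0 := abs_le.1 (dist_dist_le (x := x) hy0)
        refine hy0A ⟨?_, ?_⟩
        · have := hy.1
          rcases lt_abs.1 h2 with h | h <;> linarith [d1.1, d1.2, d0.1, d0.2]
        · have := hy.2
          rcases lt_abs.1 h1 with h | h <;> linarith [d1.1, d1.2, d0.1, d0.2]
      rw [setIntegral_congr_fun (meas_ann x ε ε') (g := fun _ => (0:ℝ)) hz]
      simp

lemma CZO.ann_sum {d : ℕ} (S : CZO d) (f g : Rd d → ℝ) (hf : Integrable f volume)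
    (hg : Integrable g volume) {ι : Type*} [Countable ι] (b : ι → Rd d → ℝ)
    (hb : ∀ j, Integrable (b j) volume) (hsum : ∀ y, HasSum (fun j => b j y) (f y - g y))
    (hfin : ∑' j, ∫⁻ y, ‖b j y‖ₑ ≠ ⊤) (x : Rd d) (ε ε' : ℝ) (hε : 0 < ε) :
    ‖∫ y in ann x ε ε', S.K x y * f y‖ₑ ≤ ‖∫ y in ann x ε ε', S.K x y * g y‖ₑ +
      ∑' j, ‖∫ y in ann x ε ε', S.K x y * b j y‖ₑ := by
  have hi : ∀ f : Rd d → ℝ, Integrable f volume →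
      IntegrableOn (fun y => S.K x y * f y) (ann x ε ε') volume := fun f hf =>
    (S.integrableOn_K f hf x ε hε).mono_set fun y hy => hy.1
  have e : ∫ y in ann x ε ε', S.K x y * f y = (∫ y in ann x ε ε', S.K x y * g y) +
      ∑' j, ∫ y in ann x ε ε', S.K x y * b j y := by
    rw [← integral_tsum (fun j => (hi _ (hb j)).aestronglyMeasurable)]
    · rw [← sub_eq_iff_eq_add', ← integral_sub (hi f hf) (hi g hg)]
      congr 1; ext y
      rw [tsum_mul_left, (hsum y).tsum_eq]; ring
    · have hb2 : ∀ j, ∫⁻ y in ann x ε ε', ‖S.K x y * b j y‖ₑ ≤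
          ENNReal.ofReal (S.Cst / ε ^ d) * ∫⁻ y, ‖b j y‖ₑ := by
        intro j
        rw [← lintegral_const_mul' _ _ ENNReal.ofReal_ne_top]
        refine le_trans ?_ (setLIntegral_le_lintegral (ann x ε ε') _)
        refine setLIntegral_mono' (meas_ann x ε ε') fun y hy => ?_
        rw [enorm_mul]
        gcongr
        rw [Real.enorm_eq_ofReal_abs]
        exact ENNReal.ofReal_le_ofReal (S.K_bd x y ε hε hy.1.le)
      refine ne_top_of_le_ne_top ?_ (ENNReal.tsum_le_tsum hb2)
      rw [ENNReal.tsum_mul_left]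
      exact ENNReal.mul_ne_top ENNReal.ofReal_ne_top hfin
  rw [e]
  exact (enorm_add_le _ _).trans (by gcongr; exact enorm_tsum_le_tsum_enorm)

lemma tsum_ann_le {d : ℕ} (x : Rd d) (ε : ℕ → ℝ) (hε : StrictAnti ε) (h : Rd d → ℝ≥0∞) :
    ∑' i, ∫⁻ y in ann x (ε (i + 1)) (ε i), h y ≤ ∫⁻ y, h y := by
  rw [← lintegral_iUnion (fun i => meas_ann x _ _)]
  · exact setLIntegral_le_lintegral _ _
  · intro i j hij
    wlog hlt : i < j generalizing i j
    · exact (this hij.symm (by omega)).symm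
    refine Set.disjoint_left.2 fun y h1 h2 => ?_
    have a1 := h1.1
    have a2 := h2.2
    have : ε j ≤ ε (i + 1) := hε.antitone hlt
    linarith

lemma CZO.pointwise {d : ℕ} (S : CZO d) (ρ : ℝ) (hρ : 2 ≤ ρ) (f g : Rd d → ℝ)
    (hf : Integrable f volume)
    (hg : Integrable g volume) {ι : Type*} [Countable ι] (b : ι → Rd d → ℝ)
    (hb : ∀ j, Integrable (b j) volume) (hsum : ∀ y, HasSum (fun j => b j y) (f y - g y))
    (hfin : ∑' j, ∫⁻ y, ‖b j y‖ₑ ≠ ⊤) (c : ι → Rd d) (l : ι → ℝ) (hl : ∀ j, 0 < l j)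
    (hbs : ∀ j y, y ∉ Metric.closedBall (c j) (l j) → b j y = 0) (hb0 : ∀ j, ∫ y, b j y = 0)
    (x : Rd d) (hx : ∀ j, 2 * l j ≤ dist x (c j)) (M : ℝ≥0∞)
    (hM : ∀ ε, 0 < ε → ∑' j, {j | |dist x (c j) - ε| ≤ l j}.indicator
      (fun j => ENNReal.ofReal ((1 / dist x (c j)) ^ d * (√(l j / dist x (c j)))⁻¹) *
        ∫⁻ y, ‖b j y‖ₑ) j ≤ M) :
    S.var ρ f x ≤ S.var ρ g x +
      (ENNReal.ofReal S.Cst * (∑' j, (ENNReal.ofReal (S.ω (l j / dist x (c j))) *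
        ENNReal.ofReal ((1 / dist x (c j)) ^ d)) * ∫⁻ y, ‖b j y‖ₑ) +
      (ENNReal.ofReal (S.Cst * 2 ^ d) * (2 * M) * (ENNReal.ofReal (S.Cst * 2 ^ d) *
        ∑' j, (ENNReal.ofReal (√(l j / dist x (c j))) *
        ENNReal.ofReal ((1 / dist x (c j)) ^ d)) * ∫⁻ y, ‖b j y‖ₑ)) ^ (1 / 2 : ℝ)) := by
  have hρ1 : 1 ≤ ρ := by linarith
  have hρ0 : 0 < ρ := by linarith
  conv_lhs => unfold CZO.var
  refine iSup₂_le fun ε hε => ?_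
  obtain ⟨hanti, hpos, hlim⟩ := hε
  set CC := ENNReal.ofReal (S.Cst * 2 ^ d) with hCC
  set m : ι → ℝ≥0∞ := fun j => ∫⁻ y, ‖b j y‖ₑ with hm
  let mm : ℕ → ι → ℝ≥0∞ := fun i j => ∫⁻ y in ann x (ε (i + 1)) (ε i), ‖b j y‖ₑ
  have hmm : ∀ i j, mm i j ≤ m j := fun i j => setLIntegral_le_lintegral _ _
  have hmsum : ∀ j, ∑' i, mm i j ≤ m j := fun j => tsum_ann_le x ε hanti _
  let R : ι → ℝ≥0∞ := fun j => ENNReal.ofReal ((1 / dist x (c j)) ^ d)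
  let om : ι → ℝ≥0∞ := fun j => ENNReal.ofReal (S.ω (l j / dist x (c j))) * R j
  let dl : ℕ → Set ι := fun i => {j | |dist x (c j) - ε i| ≤ l j} ∪ {j | |dist x (c j) - ε (i + 1)| ≤ l j}
  let u : ℕ → ℝ≥0∞ := fun i => ∑' j, ENNReal.ofReal S.Cst * om j * mm i j
  let v : ℕ → ℝ≥0∞ := fun i => ∑' j, (dl i).indicator (fun j => CC * R j * mm i j) j
  let G : ℕ → ℝ≥0∞ := fun i => ENNReal.ofReal |S.trunc (ε (i + 1)) g x - S.trunc (ε i) g x|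
  have hterm : ∀ i, ENNReal.ofReal |S.trunc (ε (i + 1)) f x - S.trunc (ε i) f x| ≤
      G i + (u i + v i) := by
    intro i
    have hlt : ε (i + 1) < ε i := hanti (Nat.lt_succ_self i)
    simp only [G]
    rw [S.trunc_sub f hf x _ _ (hpos _) hlt, S.trunc_sub g hg x _ _ (hpos _) hlt,
      ← Real.enorm_eq_ofReal_abs, ← Real.enorm_eq_ofReal_abs]
    refine (S.ann_sum f g hf hg b hb hsum hfin x (ε (i + 1)) (ε i) (hpos _)).trans ?_
    refine add_le_add le_rfl ?_
    simp only [u, v]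
    rw [← ENNReal.tsum_add]
    refine ENNReal.tsum_le_tsum fun j => ?_
    refine (S.piece (b j) (hb j) (c j) (l j) (hl j) (hbs j) (hb0 j) x (hx j) _ _ (hpos _)).trans ?_
    split_ifs with hbd
    · have : j ∈ dl i := hbd
      rw [indicator_of_mem this]
      exact le_add_self
    · exact le_self_add
  have hu : ∑' i, u i ≤ ENNReal.ofReal S.Cst * ∑' j, om j * m j := by
    simp only [u]
    rw [ENNReal.tsum_comm, ← ENNReal.tsum_mul_left]
    refine ENNReal.tsum_le_tsum fun j => ?_
    rw [ENNReal.tsum_mul_left, mul_assoc]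
    exact mul_le_mul_right (mul_le_mul_right (hmsum j) _) _
  let w : ι → ℝ≥0∞ := fun j => ENNReal.ofReal (√(l j / dist x (c j))) * R j
  let p : ι → ℝ≥0∞ := fun j =>
    ENNReal.ofReal ((1 / dist x (c j)) ^ d * (√(l j / dist x (c j)))⁻¹) * m j
  have hv1 : ∀ i, v i ^ 2 ≤ CC * (2 * M) * (∑' j, CC * (w j * mm i j)) := by
    intro i
    have h1 : ∑' j, (dl i).indicator (fun j => CC * p j) j ≤ CC * (2 * M) := by
      have : ∀ j, (dl i).indicator (fun j => CC * p j) j ≤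
          CC * ({j | |dist x (c j) - ε i| ≤ l j}.indicator p j +
            {j | |dist x (c j) - ε (i + 1)| ≤ l j}.indicator p j) := by
        intro j
        by_cases hj : j ∈ dl i
        · rw [indicator_of_mem hj]
          gcongr
          rcases hj with hj | hj
          · rw [indicator_of_mem hj]; exact le_self_add
          · rw [indicator_of_mem (s := {j | |dist x (c j) - ε (i + 1)| ≤ l j}) hj]
            exact le_add_self
        · rw [indicator_of_notMem hj]; exact zero_le
      refine (ENNReal.tsum_le_tsum this).trans ?_
      rw [ENNReal.tsum_mul_left, ENNReal.tsum_add, two_mul]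
      gcongr
      · exact hM _ (hpos i)
      · exact hM _ (hpos (i + 1))
    refine (cs_tsum _ ((dl i).indicator (fun j => CC * p j)) (fun j => CC * (w j * mm i j)) ?_).trans
      (mul_le_mul_left h1 _)
    intro j
    by_cases hj : j ∈ dl i
    swap
    · simp [hj]
    rw [indicator_of_mem hj, indicator_of_mem hj]
    have hlj := hl j
    have hr : 0 < dist x (c j) := by linarith [hx j]
    have hs : 0 < √(l j / dist x (c j)) := Real.sqrt_pos.2 (by positivity)
    have e : ENNReal.ofReal ((1 / dist x (c j)) ^ d * (√(l j / dist x (c j)))⁻¹) *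
        ENNReal.ofReal (√(l j / dist x (c j))) = R j := by
      rw [← ENNReal.ofReal_mul (by positivity), mul_assoc, inv_mul_cancel₀ hs.ne', mul_one]
    calc (CC * R j * mm i j) ^ 2 = CC * CC * R j * R j * (mm i j * mm i j) := by ring
      _ ≤ CC * CC * R j * R j * (m j * mm i j) := by gcongr; exact hmm i j
      _ = CC * CC * (ENNReal.ofReal ((1 / dist x (c j)) ^ d * (√(l j / dist x (c j)))⁻¹) *
        ENNReal.ofReal (√(l j / dist x (c j)))) * R j * (m j * mm i j) := by rw [e]
      _ = CC * p j * (CC * (w j * mm i j)) := by simp only [p, w]; ring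
  have hv : ∑' i, v i ^ 2 ≤ CC * (2 * M) * (CC * ∑' j, w j * m j) := by
    refine (ENNReal.tsum_le_tsum hv1).trans ?_
    rw [ENNReal.tsum_mul_left, ENNReal.tsum_comm, ← ENNReal.tsum_mul_left (a := CC) (f := fun j => w j * m j)]
    gcongr with j
    rw [ENNReal.tsum_mul_left, ENNReal.tsum_mul_left]
    gcongr
    exact hmsum j
  calc _ ≤ (∑' i, (G i + (u i + v i)) ^ ρ) ^ (1 / ρ) := by
        gcongr with i; exact hterm i
    _ ≤ (∑' i, G i ^ ρ) ^ (1 / ρ) + ((∑' i, u i ^ ρ) ^ (1 / ρ) + (∑' i, v i ^ ρ) ^ (1 / ρ)) :=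
        (lp_minkowski ρ hρ1 _ _).trans (add_le_add le_rfl (lp_minkowski ρ hρ1 _ _))
    _ ≤ _ := by
        refine add_le_add ?_ (add_le_add ?_ ?_)
        · unfold CZO.var
          exact le_iSup₂_of_le (f := fun (ε : ℕ → ℝ) (_ : StrictAnti ε ∧ (∀ i, 0 < ε i) ∧ Tendsto ε atTop (nhds 0)) =>
            (∑' i : ℕ, ENNReal.ofReal |S.trunc (ε (i + 1)) g x - S.trunc (ε i) g x| ^ ρ) ^ (1 / ρ))
            ε ⟨hanti, hpos, hlim⟩ le_rfl
        · exact (lp_le_l1 ρ hρ1 u).trans hu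
        · exact (lp_le_l2 ρ hρ v).trans (by gcongr)

lemma cz_cover {d : ℕ} (hd : 0 < d) (f : Rd d → ℝ) (hfm : Measurable f)
    (hF : ∫⁻ y, ‖f y‖ₑ ≠ ⊤) (t : ℝ) (ht : 0 < t) :
    ∃ (u : Set (Rd d)) (r : Rd d → ℝ), u.Countable ∧ (∀ c ∈ u, 0 < r c) ∧
      (u.PairwiseDisjoint fun c => Metric.closedBall c (r c)) ∧
      (∀ c ∈ u, ENNReal.ofReal t * volume (Metric.closedBall c (r c)) ≤
        ∫⁻ y in Metric.closedBall c (r c), ‖f y‖ₑ) ∧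
      (∀ c ∈ u, ∫⁻ y in Metric.closedBall c (5 * r c), ‖f y‖ₑ ≤
        ENNReal.ofReal t * volume (Metric.closedBall c (5 * r c))) ∧
      ∀ᵐ y, y ∉ ⋃ c ∈ u, Metric.closedBall c (5 * r c) → ‖f y‖ₑ ≤ ENNReal.ofReal t := by
  have ht' : ENNReal.ofReal t ≠ 0 := by simpa using ht
  let Rx : Rd d → Set ℝ := fun x => {r | 0 < r ∧ ENNReal.ofReal t * volume (Metric.closedBall x r) <
    ∫⁻ y in Metric.closedBall x r, ‖f y‖ₑ}
  let F := ∫⁻ y, ‖f y‖ₑ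
  let R : ℝ := max 1 (F / (ENNReal.ofReal t * vB d)).toReal
  have hR : ∀ x, ∀ r ∈ Rx x, r ≤ R := by
    rintro x r ⟨hr0, hr⟩
    rcases le_or_gt r 1 with h1 | h1
    · exact h1.trans (le_max_left _ _)
    refine le_trans ?_ (le_max_right _ _)
    have h2 : ENNReal.ofReal (r ^ d) * (ENNReal.ofReal t * vB d) ≤ F := by
      rw [vol_cB x hr0.le] at hr
      calc _ = ENNReal.ofReal t * (ENNReal.ofReal (r ^ d) * vB d) := by ring
        _ ≤ _ := hr.le
        _ ≤ F := setLIntegral_le_lintegral _ _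
    have hne0 : ENNReal.ofReal t * vB d ≠ 0 := mul_ne_zero ht' (vB_pos d)
    have hnt : ENNReal.ofReal t * vB d ≠ ⊤ := ENNReal.mul_ne_top ENNReal.ofReal_ne_top (vB_top d)
    rw [← ENNReal.le_div_iff_mul_le (Or.inl hne0) (Or.inl hnt)] at h2
    have h3 := (ENNReal.ofReal_le_iff_le_toReal (ENNReal.div_ne_top hF hne0)).1 h2
    exact le_trans (le_self_pow₀ h1.le hd.ne') h3
  let S0 : Set (Rd d) := {x | (Rx x).Nonempty}
  have hch : ∀ x, ∃ r, x ∈ S0 → r ∈ Rx x ∧ 5 * r ∉ Rx x := by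
    intro x
    by_cases hx : x ∈ S0
    swap
    · exact ⟨0, fun h => absurd h hx⟩
    have hbd : BddAbove (Rx x) := ⟨R, fun r hr => hR x r hr⟩
    obtain ⟨r0, hr0⟩ := hx
    have hpos : 0 < sSup (Rx x) := lt_of_lt_of_le hr0.1 (le_csSup hbd hr0)
    obtain ⟨r, hr, hr2⟩ := exists_lt_of_lt_csSup ⟨r0, hr0⟩ (show sSup (Rx x) / 5 < sSup (Rx x) by linarith)
    refine ⟨r, fun _ => ⟨hr, fun h5 => ?_⟩⟩
    have := le_csSup hbd h5
    linarith
  choose r hr using hch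
  obtain ⟨u, huS, hud, hucov⟩ := Vitali.exists_disjoint_subfamily_covering_enlargement_closedBall
    S0 (fun x => x) r R (fun x hx => hR x _ (hr x hx).1) 5 (by norm_num)
  refine ⟨u, r, ?_, ?_, hud, ?_, ?_, ?_⟩
  · refine hud.countable_of_nonempty_interior fun c hc => ?_
    refine ⟨c, ?_⟩
    exact interior_mono Metric.ball_subset_closedBall
      (by rw [Metric.isOpen_ball.interior_eq]; exact Metric.mem_ball_self (hr c (huS hc)).1.1)
  · exact fun c hc => (hr c (huS hc)).1.1
  · exact fun c hc => (hr c (huS hc)).1.2.le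
  · intro c hc
    by_contra h
    exact (hr c (huS hc)).2 ⟨by linarith [(hr c (huS hc)).1.1], not_le.1 h⟩
  · have hL := (Besicovitch.vitaliFamily (volume : Measure (Rd d))).ae_tendsto_lintegral_div'
      (f := fun y => ‖f y‖ₑ) (by fun_prop) hF
    filter_upwards [hL] with y hy hyn
    have hyS : y ∉ S0 := fun hyS => by
      obtain ⟨b, hb, hsub⟩ := hucov y hyS
      refine hyn (mem_biUnion hb (hsub ?_))
      exact Metric.mem_closedBall_self (hr y hyS).1.1.le
    have h2 := hy.comp (Besicovitch.tendsto_filterAt (volume : Measure (Rd d)) y)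
    refine le_of_tendsto h2 ?_
    filter_upwards [self_mem_nhdsWithin] with s hs
    have hs0 : 0 < s := hs
    simp only [Function.comp]
    refine ENNReal.div_le_of_le_mul ?_
    by_contra h
    exact hyS ⟨s, hs0, not_le.1 h⟩

set_option maxHeartbeats 1000000 in
lemma cz_decomp {d : ℕ} (hd : 0 < d) (f : Rd d → ℝ) (hfm : Measurable f)
    (hF : ∫⁻ y, ‖f y‖ₑ ≠ ⊤) (t : ℝ) (ht : 0 < t) :
    ∃ (u : Set (Rd d)) (l : u → ℝ) (B : u → Set (Rd d)) (b : u → Rd d → ℝ) (g : Rd d → ℝ),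
      u.Countable ∧ (∀ j : u, 0 < l j) ∧ (∀ j : u, MeasurableSet (B j)) ∧
      Pairwise (Function.onFun Disjoint B) ∧ (∀ j : u, B j ⊆ Metric.closedBall (j : Rd d) (l j)) ∧
      (∀ j : u, volume (Metric.closedBall (j : Rd d) (2 * l j)) = ENNReal.ofReal (10 ^ d) * volume (B j)) ∧
      (ENNReal.ofReal t * ∑' j : u, volume (B j) ≤ ∫⁻ y, ‖f y‖ₑ) ∧
      (∀ j : u, Integrable (b j) volume) ∧
      (∀ j : u, ∀ y, y ∉ Metric.closedBall (j : Rd d) (l j) → b j y = 0) ∧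
      (∀ j : u, ∫ y, b j y = 0) ∧
      (∀ y, HasSum (fun j => b j y) (f y - g y)) ∧
      (∀ j : u, ∫⁻ y, ‖b j y‖ₑ ≤ 2 * (ENNReal.ofReal (5 ^ d * t) * volume (B j))) ∧
      (∑' j : u, ∫⁻ y, ‖b j y‖ₑ ≤ 2 * ∫⁻ y, ‖f y‖ₑ) ∧
      Measurable g ∧ (∀ᵐ y, ‖g y‖ₑ ≤ ENNReal.ofReal (5 ^ d * t)) ∧
      ∫⁻ y, ‖g y‖ₑ ≤ ∫⁻ y, ‖f y‖ₑ := by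
  obtain ⟨u, r, huc, hr, hdis, hlow, hup, hae⟩ := cz_cover hd f hfm hF t ht
  have hcu : Countable u := huc.to_subtype
  obtain ⟨e, he⟩ := exists_injective_nat u
  have hfi : Integrable f volume := ⟨hfm.aestronglyMeasurable, lt_top_iff_ne_top.2 hF⟩
  let l : u → ℝ := fun j => 5 * r j
  let B : u → Set (Rd d) := fun j => Metric.closedBall (j : Rd d) (r j)
  let D : u → Set (Rd d) := fun j => Metric.closedBall (j : Rd d) (l j)
  let Q : u → Set (Rd d) := fun j => D j \ ⋃ k ∈ {k : u | e k < e j}, D k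
  have hrj : ∀ j : u, 0 < r j := fun j => hr j j.2
  have hDm : ∀ j, MeasurableSet (D j) := fun j => Metric.isClosed_closedBall.measurableSet
  have hBm : ∀ j, MeasurableSet (B j) := fun j => Metric.isClosed_closedBall.measurableSet
  have hQm : ∀ j, MeasurableSet (Q j) := fun j =>
    (hDm j).diff (MeasurableSet.biUnion (to_countable _) fun k _ => hDm k)
  have hBd : Pairwise (Function.onFun Disjoint B) := fun i j hij =>
    hdis i.2 j.2 (fun h => hij (Subtype.ext h))
  have hBD : ∀ j, B j ⊆ D j := fun j =>
    Metric.closedBall_subset_closedBall (by have := hrj j; simp only [l]; linarith)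
  have hQd : Pairwise (Function.onFun Disjoint Q) := by
    intro i j hij
    wlog h : e i < e j generalizing i j
    · exact (this hij.symm (lt_of_le_of_ne (not_lt.1 h) (fun h => hij (he h).symm))).symm
    refine Set.disjoint_left.2 fun y h1 h2 => ?_
    exact h2.2 (mem_biUnion (show i ∈ {k : u | e k < e j} from h) h1.1)
  let Ω : Set (Rd d) := ⋃ j, D j
  have hΩQ : Ω = ⋃ j, Q j := by
    apply subset_antisymm
    · intro y hy
      have hne : ∃ n, ∃ j : u, e j = n ∧ y ∈ D j := by
        obtain ⟨j, hj⟩ := mem_iUnion.1 hy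
        exact ⟨e j, j, rfl, hj⟩
      obtain ⟨j, hj1, hj2⟩ := Nat.find_spec hne
      refine mem_iUnion.2 ⟨j, hj2, fun h => ?_⟩
      obtain ⟨k, hk, hk2⟩ := mem_iUnion₂.1 h
      exact Nat.find_min hne (m := e k) (by rw [← hj1]; exact hk) ⟨k, rfl, hk2⟩
    · exact iUnion_mono fun j => sdiff_subset
  have hΩm : MeasurableSet Ω := MeasurableSet.iUnion hDm
  have hvB0 : ∀ j, volume (B j) ≠ 0 := fun j => (Metric.measure_closedBall_pos _ _ (hrj j)).ne'
  have hvBt : ∀ j, volume (B j) ≠ ⊤ := fun j => Metric.isBounded_closedBall.measure_lt_top.ne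
  let a : u → ℝ := fun j => (∫ y in Q j, f y) / (volume (B j)).toReal
  have ha : ∀ j, a j * (volume (B j)).toReal = ∫ y in Q j, f y := fun j =>
    div_mul_cancel₀ _ (ENNReal.toReal_ne_zero.2 ⟨hvB0 j, hvBt j⟩)
  have hae1 : ∀ j, ‖a j‖ₑ * volume (B j) ≤ ∫⁻ y in Q j, ‖f y‖ₑ := by
    intro j
    refine le_trans (le_of_eq ?_) (enorm_integral_le_lintegral_enorm _)
    rw [← ha j, enorm_mul]
    congr 1
    rw [Real.enorm_of_nonneg ENNReal.toReal_nonneg, ENNReal.ofReal_toReal (hvBt j)]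
  have hQf : ∀ j, ∫⁻ y in Q j, ‖f y‖ₑ ≤ ENNReal.ofReal (5 ^ d * t) * volume (B j) := by
    intro j
    calc _ ≤ ∫⁻ y in D j, ‖f y‖ₑ := lintegral_mono_set sdiff_subset
      _ ≤ _ := hup j j.2
      _ = _ := by
        simp only [B]
        rw [vol_cB _ (by linarith [hrj j]), vol_cB _ (hrj j).le, mul_pow,
          ENNReal.ofReal_mul (by positivity), ENNReal.ofReal_mul (by positivity)]
        ring
  have hae2 : ∀ j, ‖a j‖ₑ ≤ ENNReal.ofReal (5 ^ d * t) := fun j =>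
    (ENNReal.mul_le_mul_iff_left (hvB0 j) (hvBt j)).1 ((hae1 j).trans (hQf j))
  have hsQ : ∑' j, ∫⁻ y in Q j, ‖f y‖ₑ = ∫⁻ y in Ω, ‖f y‖ₑ := by
    rw [hΩQ, lintegral_iUnion hQm hQd]
  have hsQ' : ∑' j, ∫⁻ y in Q j, ‖f y‖ₑ ≤ ∫⁻ y, ‖f y‖ₑ :=
    hsQ.le.trans (setLIntegral_le_lintegral _ _)
  let b : u → Rd d → ℝ := fun j y => (Q j).indicator f y - (B j).indicator (fun _ => a j) y
  let H : Rd d → ℝ := fun y => ∑' j, (B j).indicator (fun _ => a j) y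
  let g : Rd d → ℝ := fun y => Ωᶜ.indicator f y + H y
  have hmj : ∀ j, ∫⁻ y, ‖b j y‖ₑ ≤ 2 * ∫⁻ y in Q j, ‖f y‖ₑ := by
    intro j
    calc ∫⁻ y, ‖b j y‖ₑ ≤ ∫⁻ y, ((Q j).indicator (fun y => ‖f y‖ₑ) y +
          (B j).indicator (fun _ => ‖a j‖ₑ) y) := by
          refine lintegral_mono fun y => ?_
          refine (enorm_sub_le).trans ?_
          rw [enorm_indicator_eq_indicator_enorm, enorm_indicator_eq_indicator_enorm]
      _ = (∫⁻ y in Q j, ‖f y‖ₑ) + ‖a j‖ₑ * volume (B j) := by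
          rw [lintegral_add_right _ (measurable_const.indicator (hBm j)),
            lintegral_indicator (hQm j), lintegral_indicator (hBm j), setLIntegral_const]
      _ ≤ _ := by rw [two_mul]; gcongr; exact hae1 j
  have hsumB : ∀ y, HasSum (fun j => (B j).indicator (fun _ => a j) y) (H y) ∧
      ((∃ j, y ∈ B j ∧ H y = a j) ∨ ((∀ j, y ∉ B j) ∧ H y = 0)) := by
    intro y
    by_cases hy : ∃ j, y ∈ B j
    · obtain ⟨j, hj⟩ := hy
      have : HasSum (fun j => (B j).indicator (fun _ => a j) y) (a j) := by
        have := hasSum_single (f := fun j => (B j).indicator (fun _ => a j) y) j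
          (fun k hk => indicator_of_notMem (fun hk2 => Set.disjoint_left.1 (hBd hk) hk2 hj) _)
        rwa [indicator_of_mem hj] at this
      have e2 : H y = a j := this.tsum_eq
      exact ⟨by rw [e2]; exact this, Or.inl ⟨j, hj, e2⟩⟩
    · push Not at hy
      have e1 : (fun j => (B j).indicator (fun _ => a j) y) = fun _ => 0 := by
        ext j; exact indicator_of_notMem (hy j) _
      have e2 : H y = 0 := by simp only [H]; rw [e1]; simp
      exact ⟨by rw [e1, e2]; exact hasSum_zero, Or.inr ⟨hy, e2⟩⟩
  have hsumQ : ∀ y, HasSum (fun j => (Q j).indicator f y) (Ω.indicator f y) := by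
    intro y
    by_cases hy : y ∈ Ω
    · rw [indicator_of_mem hy]
      rw [hΩQ] at hy
      obtain ⟨j, hj⟩ := mem_iUnion.1 hy
      have := hasSum_single (f := fun j => (Q j).indicator f y) j
          (fun k hk => indicator_of_notMem (fun hk2 => Set.disjoint_left.1 (hQd hk) hk2 hj) _)
      rwa [indicator_of_mem hj] at this
    · rw [indicator_of_notMem hy]
      rw [hΩQ] at hy
      have e1 : (fun j => (Q j).indicator f y) = fun _ => 0 := by
        ext j; exact indicator_of_notMem (fun h => hy (mem_iUnion.2 ⟨j, h⟩)) _
      rw [e1]; exact hasSum_zero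
  have hHm : Measurable H := Measurable.tsum fun j => measurable_const.indicator (hBm j)
  have hHc : ∀ y, y ∉ Ω → H y = 0 := by
    intro y hy
    rcases (hsumB y).2 with ⟨j, hj, _⟩ | ⟨_, h⟩
    · exact absurd (mem_iUnion.2 ⟨j, hBD j hj⟩) hy
    · exact h
  refine ⟨u, l, B, b, g, huc, fun j => by have := hrj j; simp only [l]; linarith, hBm, hBd, hBD,
    ?_, ?_, ?_, ?_, ?_, ?_, ?_, ?_, ?_, ?_, ?_⟩
  · intro j
    have h0 := hrj j
    simp only [B, l]
    rw [vol_cB _ (by linarith), vol_cB _ h0.le,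
      show (2 * (5 * r (j : Rd d))) ^ d = 10 ^ d * r (j : Rd d) ^ d by rw [← mul_pow]; ring,
      ENNReal.ofReal_mul (by positivity), mul_assoc]
  · rw [← ENNReal.tsum_mul_left]
    calc _ ≤ ∑' j, ∫⁻ y in B j, ‖f y‖ₑ := ENNReal.tsum_le_tsum fun j => hlow j j.2
      _ = ∫⁻ y in ⋃ j, B j, ‖f y‖ₑ := by rw [lintegral_iUnion hBm hBd]
      _ ≤ _ := setLIntegral_le_lintegral _ _
  · intro j
    exact (hfi.indicator (hQm j)).sub ((integrable_indicator_iff (hBm j)).2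
      (integrableOn_const (hvBt j)))
  · intro j y hy
    simp only [b]
    rw [indicator_of_notMem (fun h => hy h.1), indicator_of_notMem (fun h => hy (hBD j h)), sub_zero]
  · intro j
    simp only [b]
    rw [integral_sub (hfi.indicator (hQm j)) ((integrable_indicator_iff (hBm j)).2
      (integrableOn_const (hvBt j))), integral_indicator (hQm j), integral_indicator (hBm j),
      setIntegral_const, ← ha j]
    simp [Measure.real, mul_comm]
  · intro y
    have e1 : f y - g y = Ω.indicator f y - H y := by
      simp only [g]
      by_cases hy : y ∈ Ω <;> simp [hy]
    rw [e1]
    exact (hsumQ y).sub (hsumB y).1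
  · exact fun j => (hmj j).trans (mul_le_mul_right (hQf j) _)
  · refine (ENNReal.tsum_le_tsum hmj).trans ?_
    rw [ENNReal.tsum_mul_left]
    gcongr
  · exact (hfm.indicator hΩm.compl).add hHm
  · filter_upwards [hae] with y hy
    simp only [g]
    by_cases hyΩ : y ∈ Ω
    · rw [indicator_of_notMem (by simpa using hyΩ), zero_add]
      rcases (hsumB y).2 with ⟨j, _, h⟩ | ⟨_, h⟩
      · rw [h]; exact hae2 j
      · rw [h]; simp
    · rw [indicator_of_mem hyΩ, hHc y hyΩ, add_zero]
      refine (hy ?_).trans (ENNReal.ofReal_le_ofReal ?_)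
      · intro h
        obtain ⟨c, hc, hc2⟩ := mem_iUnion₂.1 h
        exact hyΩ (mem_iUnion.2 ⟨⟨c, hc⟩, hc2⟩)
      · have : (1:ℝ) ≤ 5 ^ d := one_le_pow₀ (by norm_num)
        nlinarith
  · calc ∫⁻ y, ‖g y‖ₑ ≤ ∫⁻ y, (Ωᶜ.indicator (fun y => ‖f y‖ₑ) y +
          ∑' j, (B j).indicator (fun _ => ‖a j‖ₑ) y) := by
          refine lintegral_mono fun y => ?_
          refine (enorm_add_le _ _).trans ?_
          rw [enorm_indicator_eq_indicator_enorm]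
          refine add_le_add le_rfl ?_
          refine enorm_tsum_le_tsum_enorm.trans (le_of_eq ?_)
          congr 1; ext j; rw [enorm_indicator_eq_indicator_enorm]
      _ = (∫⁻ y in Ωᶜ, ‖f y‖ₑ) + ∑' j, ‖a j‖ₑ * volume (B j) := by
          rw [lintegral_add_left (by exact Measurable.indicator (by fun_prop) hΩm.compl),
            lintegral_indicator hΩm.compl,
            lintegral_tsum (fun j => (measurable_const.indicator (hBm j)).aemeasurable)]
          congr 2; ext j
          rw [lintegral_indicator (hBm j), setLIntegral_const]
      _ ≤ (∫⁻ y in Ωᶜ, ‖f y‖ₑ) + ∫⁻ y in Ω, ‖f y‖ₑ := by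
          rw [← hsQ]; gcongr with j; exact hae1 j
      _ = _ := by rw [add_comm, lintegral_add_compl _ hΩm]

lemma tail_cheb {d : ℕ} (φ : ℝ → ℝ) (hφ : MonotoneOn φ (Ici 0)) {ι : Type*} [Countable ι]
    (c : ι → Rd d) (l : ι → ℝ) (hl : ∀ j, 0 < l j) (m : ι → ℝ≥0∞) (E : Set (Rd d))
    (hE : MeasurableSet E) (hx : ∀ x ∈ E, ∀ j, 2 * l j ≤ dist x (c j)) (k s : ℝ≥0∞) :
    s * volume (E ∩ {x | s ≤ k * ∑' j, (ENNReal.ofReal (φ (l j / dist x (c j))) *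
        ENNReal.ofReal ((1 / dist x (c j)) ^ d)) * m j}) ≤
      k * ((ENNReal.ofReal (2 ^ d) * vB d * dsum φ) * ∑' j, m j) := by
  have hmono : Monotone fun r : ℝ => φ (max r 0) := fun a b hab =>
    hφ (show (0:ℝ) ≤ max a 0 from le_max_right _ _) (show (0:ℝ) ≤ max b 0 from le_max_right _ _)
      (max_le_max_right _ hab)
  have hφm : Measurable fun r : ℝ => φ (max r 0) := hmono.measurable
  have hm1 : ∀ j, Measurable fun x : Rd d => ENNReal.ofReal (φ (l j / dist x (c j))) := by
    intro j
    have h1 : Measurable fun x : Rd d => l j / dist x (c j) := by fun_prop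
    have h2 := (hφm.comp h1).ennreal_ofReal
    convert h2 using 2 with x
    simp only [Function.comp]
    rw [max_eq_left (div_nonneg (hl j).le dist_nonneg)]
  have hm2 : ∀ j, Measurable fun x : Rd d => (ENNReal.ofReal (φ (l j / dist x (c j))) *
        ENNReal.ofReal ((1 / dist x (c j)) ^ d)) * m j := by
    intro j
    exact ((hm1 j).mul (by fun_prop)).mul_const _
  have hV : Measurable fun x : Rd d => k * ∑' j, (ENNReal.ofReal (φ (l j / dist x (c j))) *
        ENNReal.ofReal ((1 / dist x (c j)) ^ d)) * m j :=
    (Measurable.tsum hm2).const_mul _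
  have h1 := mul_meas_ge_le_lintegral (μ := volume.restrict E) hV s
  rw [Measure.restrict_apply (measurableSet_le measurable_const hV), inter_comm] at h1
  refine h1.trans ?_
  rw [lintegral_const_mul _ (Measurable.tsum hm2),
    lintegral_tsum (fun j => (hm2 j).aemeasurable)]
  refine mul_le_mul_right ?_ _
  rw [← ENNReal.tsum_mul_left]
  refine ENNReal.tsum_le_tsum fun j => ?_
  have hm3 : Measurable fun x : Rd d => ENNReal.ofReal (φ (l j / dist x (c j))) *
      ENNReal.ofReal ((1 / dist x (c j)) ^ d) := (hm1 j).mul (by fun_prop)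
  rw [lintegral_mul_const _ hm3]
  refine mul_le_mul_left ?_ _
  refine (lintegral_mono_set ?_).trans (annuli φ hφ (c j) (l j) (hl j))
  exact fun x hxE => hx x hxE j

lemma CZO.cheb_good {d : ℕ} (hd : 0 < d) (S : CZO d) (ρ q A : ℝ) (hρ : 2 < ρ) (hq : 1 < q)
    (g : Rd d → ℝ) (hgm : Measurable g) (hgi : Integrable g volume)
    (hA : ∫⁻ x, S.var ρ g x ^ q ∂volume ≤
      ENNReal.ofReal A * ∫⁻ x, ENNReal.ofReal |g x| ^ q ∂volume)
    (t : ℝ) (ht : 0 < t) (hg : ∀ᵐ y, ‖g y‖ₑ ≤ ENNReal.ofReal (5 ^ d * t)) :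
    ENNReal.ofReal t * volume {x | ENNReal.ofReal (t / 2) ≤ S.var ρ g x} ≤
      ENNReal.ofReal (2 ^ q) * ENNReal.ofReal A * ENNReal.ofReal ((5 ^ d) ^ (q - 1)) *
        ∫⁻ y, ‖g y‖ₑ := by
  have hm := S.var_meas hd ρ (by linarith) g hgm hgi
  have h1 := mul_meas_ge_le_lintegral (μ := volume) (hm.pow_const q) (ENNReal.ofReal (t / 2) ^ q)
  have hset : {x | ENNReal.ofReal (t / 2) ^ q ≤ S.var ρ g x ^ q} =
      {x | ENNReal.ofReal (t / 2) ≤ S.var ρ g x} := by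
    ext x
    exact ENNReal.rpow_le_rpow_iff (by linarith)
  rw [hset] at h1
  have h2 : ∫⁻ x, ENNReal.ofReal |g x| ^ q ≤
      ENNReal.ofReal ((5 ^ d * t) ^ (q - 1)) * ∫⁻ y, ‖g y‖ₑ := by
    rw [← lintegral_const_mul _ (by fun_prop)]
    refine lintegral_mono_ae ?_
    filter_upwards [hg] with y hy
    rw [← Real.enorm_eq_ofReal_abs]
    calc ‖g y‖ₑ ^ q = ‖g y‖ₑ ^ ((q - 1) + 1) := by ring_nf
      _ = ‖g y‖ₑ ^ (q - 1) * ‖g y‖ₑ := by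
        rw [ENNReal.rpow_add_of_nonneg _ _ (by linarith) zero_le_one, ENNReal.rpow_one]
      _ ≤ ENNReal.ofReal (5 ^ d * t) ^ (q - 1) * ‖g y‖ₑ := by
        gcongr
      _ = _ := by rw [ENNReal.ofReal_rpow_of_pos (by positivity)]
  have h3 := h1.trans (hA.trans (mul_le_mul_right h2 _))
  set v := volume {x | ENNReal.ofReal (t / 2) ≤ S.var ρ g x}
  set G := ∫⁻ y, ‖g y‖ₑ
  have ht1 : 0 < t ^ (q - 1) := Real.rpow_pos_of_pos ht _
  have e1 : ENNReal.ofReal (2 ^ q) * ENNReal.ofReal (t / 2) ^ q =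
      ENNReal.ofReal (t ^ (q - 1)) * ENNReal.ofReal t := by
    rw [ENNReal.ofReal_rpow_of_pos (by positivity), ← ENNReal.ofReal_mul (by positivity),
      ← ENNReal.ofReal_mul (by positivity), ← Real.mul_rpow (by norm_num) (by positivity),
      ← Real.rpow_add_one ht.ne']
    congr 2 <;> ring
  have e2 : ENNReal.ofReal ((5 ^ d * t) ^ (q - 1)) =
      ENNReal.ofReal ((5 ^ d) ^ (q - 1)) * ENNReal.ofReal (t ^ (q - 1)) := by
    rw [Real.mul_rpow (by positivity) ht.le, ENNReal.ofReal_mul (by positivity)]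
  rw [e2] at h3
  refine (ENNReal.mul_le_mul_iff_right (a := ENNReal.ofReal (t ^ (q - 1)))
    (by simpa using ht1) ENNReal.ofReal_ne_top).1 ?_
  calc _ = ENNReal.ofReal (2 ^ q) * (ENNReal.ofReal (t / 2) ^ q * v) := by
        rw [← mul_assoc, ← e1, mul_assoc]
    _ ≤ _ := mul_le_mul_right h3 _
    _ = _ := by ring

def constTot (d : ℕ) (S : CZO d) (q A : ℝ) : ℝ≥0∞ :=
  ENNReal.ofReal (10 ^ d) +
  ENNReal.ofReal (2 ^ q) * ENNReal.ofReal A * ENNReal.ofReal ((5 ^ d) ^ (q - 1)) +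
  4 * (ENNReal.ofReal S.Cst * ((ENNReal.ofReal (2 ^ d) * vB d * dsum S.ω) * 2)) +
  16 * (ENNReal.ofReal (S.Cst * 2 ^ d) * (2 * (2 * ENNReal.ofReal (5 ^ d) * CS d)) *
    ENNReal.ofReal (S.Cst * 2 ^ d) * ((ENNReal.ofReal (2 ^ d) * vB d * dsum Real.sqrt) * 2))

lemma constTot_top (d : ℕ) (S : CZO d) (q A : ℝ) : constTot d S q A ≠ ⊤ := by
  have h1 := vB_top d
  have h2 := dsum_dini S
  have h3 := dsum_sqrt
  have h4 := CS_top d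
  unfold constTot
  finiteness

lemma CZO.weak_core {d : ℕ} (hd : 0 < d) (S : CZO d) (ρ q A : ℝ) (hρ : 2 < ρ) (hq : 1 < q)
    (hA : ∀ f : Rd d → ℝ, Measurable f →
    ∫⁻ x, S.var ρ f x ^ q ∂volume ≤ ENNReal.ofReal A * ∫⁻ x, ENNReal.ofReal |f x| ^ q ∂volume)
    (f : Rd d → ℝ) (hfm : Measurable f) (t : ℝ) (ht : 0 < t) (hF : ∫⁻ y, ‖f y‖ₑ ≠ ⊤) :
    ENNReal.ofReal t * volume {x | ENNReal.ofReal t < S.var ρ f x} ≤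
      constTot d S q A * ∫⁻ y, ‖f y‖ₑ := by
  obtain ⟨u, l, B, b, g, huc, hl, hBm, hBd, hBs, hvol, hB1, hbi, hb0, hbI, hsum, hmB, hmF, hgm,
    hg1, hg2⟩ := cz_decomp hd f hfm hF t ht
  have hcu : Countable u := huc.to_subtype
  set F := ∫⁻ y, ‖f y‖ₑ
  set τ := ENNReal.ofReal t with hτ
  have hτ0 : τ ≠ 0 := by simpa [hτ] using ht
  have hτt : τ ≠ ⊤ := ENNReal.ofReal_ne_top
  have hfi : Integrable f volume := ⟨hfm.aestronglyMeasurable, lt_top_iff_ne_top.2 hF⟩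
  have hgi : Integrable g volume := ⟨hgm.aestronglyMeasurable, lt_of_le_of_lt hg2 (lt_top_iff_ne_top.2 hF)⟩
  let c : u → Rd d := fun j => j
  let Ω : Set (Rd d) := ⋃ j : u, Metric.closedBall (j : Rd d) (2 * l j)
  have hΩm : MeasurableSet Ω := MeasurableSet.iUnion fun j => Metric.isClosed_closedBall.measurableSet
  have hΩ : τ * volume Ω ≤ ENNReal.ofReal (10 ^ d) * F := by
    calc τ * volume Ω ≤ τ * ∑' j : u, volume (Metric.closedBall (j : Rd d) (2 * l j)) := by
          gcongr; exact measure_iUnion_le _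
      _ = ENNReal.ofReal (10 ^ d) * (τ * ∑' j : u, volume (B j)) := by
          simp_rw [hvol]; rw [ENNReal.tsum_mul_left]; ring
      _ ≤ _ := by gcongr
  have hx : ∀ x ∈ Ωᶜ, ∀ j, 2 * l j ≤ dist x (c j) := by
    intro x hx j
    by_contra h
    exact hx (mem_iUnion.2 ⟨j, (not_le.1 h).le⟩)
  let M : ℝ≥0∞ := 2 * ENNReal.ofReal (5 ^ d * t) * CS d
  have hM : ∀ x ∈ Ωᶜ, ∀ ε, 0 < ε → ∑' j, {j | |dist x (c j) - ε| ≤ l j}.indicator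
      (fun j => ENNReal.ofReal ((1 / dist x (c j)) ^ d * (√(l j / dist x (c j)))⁻¹) *
        ∫⁻ y, ‖b j y‖ₑ) j ≤ M := by
    intro x hxx ε hε
    calc _ ≤ ∑' j, 2 * ENNReal.ofReal (5 ^ d * t) * {j | |dist x (c j) - ε| ≤ l j}.indicator
          (fun j => ENNReal.ofReal ((1 / dist x (c j)) ^ d * (√(l j / dist x (c j)))⁻¹) *
            volume (B j)) j := by
          refine ENNReal.tsum_le_tsum fun j => ?_
          by_cases hj : j ∈ {j | |dist x (c j) - ε| ≤ l j}
          · rw [indicator_of_mem hj, indicator_of_mem hj]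
            refine (mul_le_mul_right (hmB j) _).trans (le_of_eq ?_)
            ring
          · rw [indicator_of_notMem hj]; exact zero_le
      _ ≤ M := by
          rw [ENNReal.tsum_mul_left]
          exact mul_le_mul_right (shell_sum hd c l B hl hBm hBd hBs x ε hε _
            fun j hj => ⟨hx x hxx j, hj⟩) _
  let P := ENNReal.ofReal (S.Cst * 2 ^ d)
  let G1 : Set (Rd d) := {x | ENNReal.ofReal (t / 2) ≤ S.var ρ g x}
  let G2 : Set (Rd d) := Ωᶜ ∩ {x | ENNReal.ofReal (t / 4) ≤ ENNReal.ofReal S.Cst *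
    ∑' j, (ENNReal.ofReal (S.ω (l j / dist x (c j))) *
        ENNReal.ofReal ((1 / dist x (c j)) ^ d)) * ∫⁻ y, ‖b j y‖ₑ}
  let G3 : Set (Rd d) := Ωᶜ ∩ {x | ENNReal.ofReal (t / 4) ^ 2 ≤ (P * (2 * M) * P) *
    ∑' j, (ENNReal.ofReal (√(l j / dist x (c j))) *
        ENNReal.ofReal ((1 / dist x (c j)) ^ d)) * ∫⁻ y, ‖b j y‖ₑ}
  have hfin : ∑' j, ∫⁻ y, ‖b j y‖ₑ ≠ ⊤ :=
    ne_top_of_le_ne_top (ENNReal.mul_ne_top (by norm_num) hF) hmF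
  have hsub : {x | τ < S.var ρ f x} ⊆ Ω ∪ G1 ∪ G2 ∪ G3 := by
    intro x hxt
    by_contra hcon
    simp only [mem_union, not_or] at hcon
    obtain ⟨⟨⟨h0, h1⟩, h2⟩, h3⟩ := hcon
    have h1' := not_le.1 (fun h : ENNReal.ofReal (t / 2) ≤ S.var ρ g x => h1 h)
    have h2' : ENNReal.ofReal S.Cst *
      ∑' j, (ENNReal.ofReal (S.ω (l j / dist x (c j))) *
        ENNReal.ofReal ((1 / dist x (c j)) ^ d)) * ∫⁻ y, ‖b j y‖ₑ < ENNReal.ofReal (t / 4) :=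
      not_le.1 (fun h => h2 ⟨h0, h⟩)
    have h3' : (P * (2 * M) * P) *
      ∑' j, (ENNReal.ofReal (√(l j / dist x (c j))) *
        ENNReal.ofReal ((1 / dist x (c j)) ^ d)) * ∫⁻ y, ‖b j y‖ₑ < ENNReal.ofReal (t / 4) ^ 2 :=
      not_le.1 (fun h => h3 ⟨h0, h⟩)
    have hp := S.pointwise ρ hρ.le f g hfi hgi b hbi hsum hfin c l hl hb0 hbI x (hx x h0) M (hM x h0)
    have h4 : (P * (2 * M) * (P * ∑' j, (ENNReal.ofReal (√(l j / dist x (c j))) *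
        ENNReal.ofReal ((1 / dist x (c j)) ^ d)) * ∫⁻ y, ‖b j y‖ₑ)) ^ (1 / 2 : ℝ) <
        ENNReal.ofReal (t / 4) := by
      rw [← mul_assoc (P * (2 * M)) P]
      have := ENNReal.rpow_lt_rpow h3' (show (0:ℝ) < 1 / 2 by norm_num)
      refine this.trans_le (le_of_eq ?_)
      rw [← ENNReal.rpow_natCast, ← ENNReal.rpow_mul]
      norm_num
    have h5 := hp.trans_lt (ENNReal.add_lt_add h1' (ENNReal.add_lt_add h2' h4))
    rw [← ENNReal.ofReal_add (by positivity) (by positivity),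
      ← ENNReal.ofReal_add (by positivity) (by positivity)] at h5
    have e : t / 2 + (t / 4 + t / 4) = t := by ring
    rw [e] at h5
    exact lt_asymm h5 hxt
  have hv1 := S.cheb_good hd ρ q A hρ hq g hgm hgi (hA g hgm) t ht hg1
  have hv2 : τ * volume G2 ≤ 4 * (ENNReal.ofReal S.Cst *
      ((ENNReal.ofReal (2 ^ d) * vB d * dsum S.ω) * 2)) * F := by
    have h := tail_cheb S.ω S.ω_mono c l hl (fun j => ∫⁻ y, ‖b j y‖ₑ) Ωᶜ hΩm.compl hx
      (ENNReal.ofReal S.Cst) (ENNReal.ofReal (t / 4))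
    have e : τ = 4 * ENNReal.ofReal (t / 4) := by
      rw [← ENNReal.ofReal_ofNat, ← ENNReal.ofReal_mul (by norm_num), hτ,
        show 4 * (t / 4) = t by ring]
    rw [e, mul_assoc]
    refine (mul_le_mul_right h 4).trans ?_
    refine (mul_le_mul_right (mul_le_mul_right (mul_le_mul_right hmF _) _) 4).trans (le_of_eq ?_)
    ring
  have hv3 : τ * volume G3 ≤ 16 * (P * (2 * (2 * ENNReal.ofReal (5 ^ d) * CS d)) *
      P * ((ENNReal.ofReal (2 ^ d) * vB d * dsum Real.sqrt) * 2)) * F := by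
    have h := tail_cheb Real.sqrt (Real.sqrt_monotone.monotoneOn _) c l hl
      (fun j => ∫⁻ y, ‖b j y‖ₑ) Ωᶜ hΩm.compl hx (P * (2 * M) * P) (ENNReal.ofReal (t / 4) ^ 2)
    have e : τ * τ = 16 * ENNReal.ofReal (t / 4) ^ 2 := by
      rw [← ENNReal.ofReal_ofNat, ← ENNReal.ofReal_pow (by positivity),
        ← ENNReal.ofReal_mul (by positivity), ← ENNReal.ofReal_mul (by positivity),
        show 16 * (t / 4) ^ 2 = t * t by ring]
    refine (ENNReal.mul_le_mul_iff_right hτ0 hτt).1 ?_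
    rw [← mul_assoc, e, mul_assoc]
    refine (mul_le_mul_right h 16).trans ?_
    refine (mul_le_mul_right (mul_le_mul_right (mul_le_mul_right hmF _) _) 16).trans (le_of_eq ?_)
    have e5 : ENNReal.ofReal (5 ^ d * t) = ENNReal.ofReal (5 ^ d) * τ :=
      ENNReal.ofReal_mul (by positivity)
    simp only [M, e5]
    ring
  calc τ * volume {x | τ < S.var ρ f x}
      ≤ τ * (volume Ω + volume G1 + volume G2 + volume G3) := by
        gcongr
        refine (measure_mono hsub).trans ?_
        refine (measure_union_le _ _).trans (add_le_add ?_ le_rfl)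
        refine (measure_union_le _ _).trans (add_le_add ?_ le_rfl)
        exact measure_union_le _ _
    _ = τ * volume Ω + τ * volume G1 + τ * volume G2 + τ * volume G3 := by ring
    _ ≤ _ := add_le_add (add_le_add (add_le_add hΩ (hv1.trans (mul_le_mul_right hg2 _))) hv2) hv3
    _ = _ := by simp only [constTot, P]; ring

/-- If `V_ρ(T_*)` is bounded on `L^q(ℝ^d)` for some `q ∈ (1,∞)`, then
`V_ρ(T_*)` is of weak type `(1,1)`. -/
theorem variation_weak_type_one_one
    (d : ℕ) (hd : 0 < d) (S : CZO d) (ρ q : ℝ) (hρ : 2 < ρ) (hq : 1 < q)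
    (hbdd : S.VarBdd ρ q) :
    ∃ C : ℝ, 0 < C ∧ ∀ f : Rd d → ℝ, Measurable f → ∀ t : ℝ, 0 < t →
      volume {x | ENNReal.ofReal t < S.var ρ f x} ≤
        ENNReal.ofReal C * (ENNReal.ofReal t)⁻¹ * ∫⁻ x, ENNReal.ofReal |f x| ∂volume := by
  obtain ⟨A, -, hA⟩ := hbdd
  refine ⟨(constTot d S q A).toReal + 1, by positivity, fun f hfm t ht => ?_⟩
  have hτ0 : ENNReal.ofReal t ≠ 0 := by simpa using ht
  have hτt : ENNReal.ofReal t ≠ ⊤ := ENNReal.ofReal_ne_top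
  have hC : constTot d S q A ≤ ENNReal.ofReal ((constTot d S q A).toReal + 1) := by
    rw [ENNReal.le_ofReal_iff_toReal_le (constTot_top d S q A) (by positivity)]
    linarith
  have hC0 : ENNReal.ofReal ((constTot d S q A).toReal + 1) ≠ 0 := by
    have : 0 < (constTot d S q A).toReal + 1 := by positivity
    simpa using this
  have hFe : ∫⁻ x, ENNReal.ofReal |f x| = ∫⁻ x, ‖f x‖ₑ := by
    simp_rw [Real.enorm_eq_ofReal_abs]
  rw [hFe]
  by_cases hF : ∫⁻ y, ‖f y‖ₑ = ⊤
  · rw [hF, ENNReal.mul_top (mul_ne_zero hC0 (ENNReal.inv_ne_zero.2 hτt))]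
    exact le_top
  have h := S.weak_core hd ρ q A hρ hq hA f hfm t ht hF
  refine (ENNReal.mul_le_mul_iff_right hτ0 hτt).1 (h.trans ?_)
  calc _ ≤ ENNReal.ofReal ((constTot d S q A).toReal + 1) * ∫⁻ y, ‖f y‖ₑ := by gcongr
    _ = (ENNReal.ofReal t * (ENNReal.ofReal t)⁻¹) *
        (ENNReal.ofReal ((constTot d S q A).toReal + 1) * ∫⁻ y, ‖f y‖ₑ) := by
      rw [ENNReal.mul_inv_cancel hτ0 hτt, one_mul]
    _ = _ := by ring
end
end

section
/- Let T be a scalar Calderón–Zygmund operator on ℝ^d with modulus of continuity ω satisfying the Dini condition, let ρ ∈ (2,∞), and assume V_ρ(T_*) is bounded on L^q(ℝ^d) for some q ∈ (1,∞) (so in particular V_ρ(T_*) is of weak type (1,1)). Then for every cube Q₀ ⊂ ℝ^d and every f ∈ L^∞(ℝ^d) supported in Q₀, for a.e. x ∈ Q₀ one has V_ρ(T_*(f χ_{3Q₀}))(x) ≤ C ‖V_ρ(T_*)‖_{L^1(ℝ^d)→L^{1,∞}(ℝ^d)} |f(x)| + M_{V_ρ(T_*),Q₀} f(x), where C depends only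 on d. -/
open MeasureTheory Set Filter Classical
open scoped ENNReal
noncomputable section

structure Good {d : ℕ} (Q₀ : Cube d) (M : ℝ) (g : Rd d → ℝ) : Prop where
  meas : Measurable g
  bdd : ∀ x, |g x| ≤ M
  supp : ∀ x, x ∉ Q₀.set → g x = 0

lemma Good.indicator {d : ℕ} {Q₀ : Cube d} {M : ℝ} {g : Rd d → ℝ} (h : Good Q₀ M g)
    {s : Set (Rd d)} (hs : MeasurableSet s) : Good Q₀ M (s.indicator g) := by
  refine ⟨h.meas.indicator hs, fun x => ?_, fun x hx => ?_⟩
  · by_cases hxs : x ∈ s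
    · simpa [hxs] using h.bdd x
    · simpa [hxs] using (abs_nonneg _).trans (h.bdd x)
  · by_cases hxs : x ∈ s <;> simp [hxs, h.supp x hx]

lemma measurableSet_box {d : ℕ} (a b : Fin d → ℝ) :
    MeasurableSet {y : Rd d | ∀ i, a i ≤ y i ∧ y i < b i} := by
  have : {y : Rd d | ∀ i, a i ≤ y i ∧ y i < b i} = ⋂ i, {y : Rd d | a i ≤ y i ∧ y i < b i} := by
    ext y; simp
  rw [this]
  refine MeasurableSet.iInter fun i => ?_
  have hm : Measurable fun y : Rd d => y i := by fun_prop
  exact (measurableSet_le measurable_const hm).inter (measurableSet_lt hm measurable_const)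

lemma Cube.measurableSet_set {d : ℕ} (Q : Cube d) : MeasurableSet Q.set :=
  measurableSet_box _ _

lemma Cube.measurableSet_dilate {d : ℕ} (Q : Cube d) (t : ℝ) : MeasurableSet (Q.dilate t) :=
  measurableSet_box _ _

lemma dist_le_of_coord {d : ℕ} (hd : 0 < d) (x y : Rd d) (a : ℝ) (ha : 0 ≤ a)
    (h : ∀ i, |x i - y i| ≤ a) : dist x y ≤ d * a := by
  rw [EuclideanSpace.dist_eq]
  apply Real.sqrt_le_iff.2 ⟨by positivity, ?_⟩
  calc ∑ i, dist (x i) (y i) ^ 2 ≤ ∑ i : Fin d, a ^ 2 := by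
        apply Finset.sum_le_sum
        intro i _
        rw [Real.dist_eq]
        exact pow_le_pow_left₀ (abs_nonneg _) (h i) 2
    _ = d * a ^ 2 := by simp
    _ ≤ (d * a) ^ 2 := by
        have : (1 : ℝ) ≤ d := by exact_mod_cast hd
        nlinarith [sq_nonneg a]

lemma coord_le_dist {d : ℕ} (x y : Rd d) (i : Fin d) : |x i - y i| ≤ dist x y := by
  rw [dist_eq_norm]
  simpa using PiLp.norm_apply_le (x - y) i

lemma Cube.volume_lt_top {d : ℕ} (hd : 0 < d) (Q : Cube d) : volume Q.set < ∞ := by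
  have : Q.set ⊆ Metric.closedBall (WithLp.toLp 2 Q.c) (d * (Q.l / 2)) := by
    intro y hy
    rw [Metric.mem_closedBall]
    apply dist_le_of_coord hd _ _ _ (by have := Q.hl; positivity)
    intro i
    have := hy i
    simp only
    rw [abs_le]; constructor <;> linarith
  exact (measure_mono this).trans_lt measure_closedBall_lt_top

lemma Good.integrableOn {d : ℕ} (hd : 0 < d) {Q₀ : Cube d} {M : ℝ} {g : Rd d → ℝ}
    (h : Good Q₀ M g) (S : CZO d) {ε : ℝ} (hε : 0 < ε) (x : Rd d) :
    IntegrableOn (fun y => S.K x y * g y) {y : Rd d | ε < dist x y} := by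
  have hms : MeasurableSet {y : Rd d | ε < dist x y} :=
    measurableSet_lt measurable_const (by fun_prop)
  have hK : Measurable fun y => S.K x y := S.measK.comp measurable_prodMk_left
  have hM : 0 ≤ M := (abs_nonneg _).trans (h.bdd x)
  have hi : Integrable (Q₀.set.indicator (fun _ => S.Cst / ε ^ d * M)) volume := by
    rw [integrable_indicator_iff Q₀.measurableSet_set]
    exact integrableOn_const (Q₀.volume_lt_top hd).ne
  refine Integrable.mono' hi.integrableOn (hK.mul h.meas).aestronglyMeasurable ?_
  refine (ae_restrict_iff' hms).2 (Eventually.of_forall fun y hy => ?_)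
  by_cases hyQ : y ∈ Q₀.set
  · have hxy : ε < dist x y := hy
    have hne : x ≠ y := by
      rintro rfl; simp at hxy; linarith
    rw [Set.indicator_of_mem hyQ, norm_mul, Real.norm_eq_abs, Real.norm_eq_abs]
    apply mul_le_mul _ (h.bdd y) (abs_nonneg _) (by have := S.hCst; positivity)
    refine (S.size x y hne).trans ?_
    apply div_le_div_of_nonneg_left S.hCst.le (by positivity)
    exact pow_le_pow_left₀ hε.le hxy.le d
  · simp [hyQ, h.supp y hyQ]

lemma trunc_add {d : ℕ} (hd : 0 < d) {Q₀ : Cube d} {M : ℝ} {g h : Rd d → ℝ}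
    (hg : Good Q₀ M g) (hh : Good Q₀ M h) (S : CZO d) {ε : ℝ} (hε : 0 < ε) (x : Rd d) :
    S.trunc ε (g + h) x = S.trunc ε g x + S.trunc ε h x := by
  unfold CZO.trunc
  rw [← integral_add (hg.integrableOn hd S hε x) (hh.integrableOn hd S hε x)]
  simp [mul_add]

lemma Lp_add_le_tsum' (f g : ℕ → ℝ≥0∞) {p : ℝ} (hp : 1 ≤ p) :
    (∑' i, (f i + g i) ^ p) ^ (1 / p) ≤ (∑' i, f i ^ p) ^ (1 / p) + (∑' i, g i ^ p) ^ (1 / p) := by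
  have := ENNReal.lintegral_Lp_add_le (μ := Measure.count) (f := f) (g := g) (p := p)
    (by fun_prop) (by fun_prop) hp
  simpa [lintegral_count] using this

lemma var_add_le {d : ℕ} (hd : 0 < d) {Q₀ : Cube d} {M : ℝ} {g h : Rd d → ℝ}
    (hg : Good Q₀ M g) (hh : Good Q₀ M h) (S : CZO d) {ρ : ℝ} (hρ : 2 < ρ) (x : Rd d) :
    S.var ρ (g + h) x ≤ S.var ρ g x + S.var ρ h x := by
  unfold CZO.var
  refine iSup₂_le fun ε hε => ?_
  refine le_trans ?_ (add_le_add (le_iSup₂ (f := fun (ε : ℕ → ℝ)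
      (_ : StrictAnti ε ∧ (∀ i, 0 < ε i) ∧ Tendsto ε atTop (nhds 0)) =>
    (∑' i : ℕ, ENNReal.ofReal |S.trunc (ε (i + 1)) g x - S.trunc (ε i) g x| ^ ρ) ^ (1 / ρ)) ε hε)
    (le_iSup₂ (f := fun (ε : ℕ → ℝ)
      (_ : StrictAnti ε ∧ (∀ i, 0 < ε i) ∧ Tendsto ε atTop (nhds 0)) =>
    (∑' i : ℕ, ENNReal.ofReal |S.trunc (ε (i + 1)) h x - S.trunc (ε i) h x| ^ ρ) ^ (1 / ρ)) ε hε))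
  refine le_trans ?_ (Lp_add_le_tsum' _ _ (by linarith))
  apply ENNReal.rpow_le_rpow _ (by positivity)
  apply ENNReal.tsum_le_tsum
  intro i
  apply ENNReal.rpow_le_rpow _ (by positivity)
  rw [← ENNReal.ofReal_add (abs_nonneg _) (abs_nonneg _)]
  apply ENNReal.ofReal_le_ofReal
  rw [trunc_add hd hg hh S (hε.2.1 _), trunc_add hd hg hh S (hε.2.1 _)]
  refine le_trans (le_of_eq ?_) (abs_add_le _ _)
  congr 1; ring

lemma trunc_eq {d : ℕ} (S : CZO d) (ε : ℝ) (g : Rd d → ℝ) (x : Rd d) :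
    S.trunc ε g x = ∫ y, {y : Rd d | ε < dist x y}.indicator (fun y => S.K x y * g y) y := by
  unfold CZO.trunc
  rw [integral_indicator]
  exact measurableSet_lt measurable_const (by fun_prop)

lemma trunc_rightCont {d : ℕ} (hd : 0 < d) {Q₀ : Cube d} {M : ℝ} {g : Rd d → ℝ}
    (hg : Good Q₀ M g) (S : CZO d) {ε : ℝ} (hε : 0 < ε) (x : Rd d) :
    Tendsto (fun r => S.trunc r g x) (nhdsWithin ε (Set.Ioi ε)) (nhds (S.trunc ε g x)) := by
  simp only [trunc_eq]
  have hK : Measurable fun y => S.K x y := S.measK.comp measurable_prodMk_left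
  have hms : ∀ r : ℝ, MeasurableSet {y : Rd d | r < dist x y} := fun r =>
    measurableSet_lt measurable_const (by fun_prop)
  refine tendsto_integral_filter_of_dominated_convergence
    (fun y => ‖{y : Rd d | ε < dist x y}.indicator (fun y => S.K x y * g y) y‖) ?_ ?_ ?_ ?_
  · exact Eventually.of_forall fun r => ((hK.mul hg.meas).indicator (hms r)).aestronglyMeasurable
  · filter_upwards [self_mem_nhdsWithin] with r hr
    refine Eventually.of_forall fun y => ?_
    apply norm_indicator_le_of_subset
    intro y hy
    have hy' : r < dist x y := hy
    exact lt_trans (Set.mem_Ioi.1 hr) hy'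
  · exact ((integrable_indicator_iff (hms ε)).2 (hg.integrableOn hd S hε x)).norm
  · refine Eventually.of_forall fun y => ?_
    apply tendsto_const_nhds.congr'
    by_cases hy : ε < dist x y
    · have : Set.Iio (dist x y) ∈ nhdsWithin ε (Set.Ioi ε) :=
        mem_nhdsWithin_of_mem_nhds (Iio_mem_nhds hy)
      filter_upwards [this] with r hr
      have hr' : r < dist x y := hr
      simp [Set.indicator, hy, hr']
    · filter_upwards [self_mem_nhdsWithin] with r hr
      have hr' : ¬ r < dist x y := fun h => hy (lt_trans hr h)
      simp [Set.indicator, hy, hr']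

lemma trunc_measurable {d : ℕ} {g : Rd d → ℝ} (hg : Measurable g)
    (S : CZO d) (ε : ℝ) : Measurable (fun x => S.trunc ε g x) := by
  simp only [trunc_eq]
  have hms : MeasurableSet {p : Rd d × Rd d | ε < dist p.1 p.2} :=
    measurableSet_lt measurable_const (by fun_prop)
  have h1 : Measurable ({p : Rd d × Rd d | ε < dist p.1 p.2}.indicator
      (fun p => S.K p.1 p.2 * g p.2)) :=
    (S.measK.mul (hg.comp measurable_snd)).indicator hms
  exact (h1.stronglyMeasurable.integral_prod_right' (ν := volume)).measurable

/-- finite variation along the list -/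
def finVar {d : ℕ} (S : CZO d) (ρ : ℝ) (g : Rd d → ℝ) (N : ℕ) (r : ℕ → ℝ) (x : Rd d) : ℝ≥0∞ :=
  (∑ i ∈ Finset.range N, ENNReal.ofReal |S.trunc (r (i + 1)) g x - S.trunc (r i) g x| ^ ρ) ^ (1 / ρ)

def toSeq (l : List ℚ) (i : ℕ) : ℝ := ((l.getD i 0 : ℚ) : ℝ)

lemma finVar_congr {d : ℕ} (S : CZO d) (ρ : ℝ) (g : Rd d → ℝ) (N : ℕ) (r r' : ℕ → ℝ) (x : Rd d)
    (h : ∀ i ≤ N, r i = r' i) : finVar S ρ g N r x = finVar S ρ g N r' x := by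
  unfold finVar
  congr 1
  apply Finset.sum_congr rfl
  intro i hi
  have := Finset.mem_range.1 hi
  rw [h i (by omega), h (i+1) (by omega)]

lemma finVar_le_var {d : ℕ} (S : CZO d) {ρ : ℝ} (hρ : 2 < ρ) (g : Rd d → ℝ) (N : ℕ) (r : ℕ → ℝ)
    (x : Rd d) (hr : ∀ i < N, r (i + 1) < r i) (hpos : 0 < r N) :
    finVar S ρ g N r x ≤ S.var ρ g x := by
  set ε : ℕ → ℝ := fun i => if i ≤ N then r i else r N / 2 ^ (i - N) with hεdef
  have hpos' : ∀ i ≤ N, 0 < r i := by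
    intro i hi
    induction hi using Nat.decreasingInduction with
    | self => exact hpos
    | of_succ k hk ih => exact ih.trans (hr k hk)
  have hε : StrictAnti ε ∧ (∀ i, 0 < ε i) ∧ Tendsto ε atTop (nhds 0) := by
    refine ⟨strictAnti_nat_of_succ_lt fun i => ?_, fun i => ?_, ?_⟩
    · simp only [hεdef]
      rcases lt_trichotomy i N with h | h | h
      · rw [if_pos (by omega), if_pos (by omega)]; exact hr i h
      · subst h
        simp; linarith
      · rw [if_neg (by omega), if_neg (by omega)]
        have : i + 1 - N = (i - N) + 1 := by omega
        rw [this, pow_succ, ← div_div]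
        have : 0 < r N / 2 ^ (i - N) := by positivity
        linarith
    · simp only [hεdef]
      split_ifs with h
      · exact hpos' i h
      · positivity
    · rw [← tendsto_add_atTop_iff_nat (N + 1)]
      have : Tendsto (fun n : ℕ => r N / 2 * (1 / 2 : ℝ) ^ n) atTop (nhds (r N / 2 * 0)) :=
        (tendsto_pow_atTop_nhds_zero_of_lt_one (by norm_num) (by norm_num)).const_mul _
      rw [mul_zero] at this
      refine this.congr fun n => ?_
      simp only [hεdef]
      rw [if_neg (by omega)]
      have : n + (N + 1) - N = n + 1 := by omega
      rw [this, pow_succ, one_div, inv_pow]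
      field_simp
  rw [finVar_congr S ρ g N r ε x (fun i hi => by simp [hεdef, hi])]
  unfold CZO.var
  refine le_trans ?_ (le_iSup₂ (f := fun (ε : ℕ → ℝ)
      (_ : StrictAnti ε ∧ (∀ i, 0 < ε i) ∧ Tendsto ε atTop (nhds 0)) =>
    (∑' i : ℕ, ENNReal.ofReal |S.trunc (ε (i + 1)) g x - S.trunc (ε i) g x| ^ ρ) ^ (1 / ρ)) ε hε)
  apply ENNReal.rpow_le_rpow _ (by positivity)
  exact ENNReal.sum_le_tsum _

lemma var_eq {d : ℕ} (hd : 0 < d) {Q₀ : Cube d} {M : ℝ} {g : Rd d → ℝ}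
    (hg : Good Q₀ M g) (S : CZO d) {ρ : ℝ} (hρ : 2 < ρ) (x : Rd d) :
    S.var ρ g x = ⨆ (N : ℕ) (l : List ℚ)
      (_ : (∀ i < N, toSeq l (i + 1) < toSeq l i) ∧ 0 < toSeq l N), finVar S ρ g N (toSeq l) x := by
  apply le_antisymm
  · unfold CZO.var
    refine iSup₂_le fun ε hε => ?_
    obtain ⟨hanti, hpos, -⟩ := hε
    have hρ' : 0 < ρ := by linarith
    rw [one_div, ENNReal.rpow_inv_le_iff hρ', ENNReal.tsum_eq_iSup_nat]
    refine iSup_le fun N => ?_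
    rw [← ENNReal.rpow_inv_le_iff hρ', ← one_div]
    change finVar S ρ g N ε x ≤ _
    have hex : ∀ (k i : ℕ), ∃ q : ℚ, ε i < q ∧ (q : ℝ) < ε i + 1 / ((k : ℝ) + 1) ∧
        ∀ j, j + 1 = i → (q : ℝ) < ε j := by
      intro k i
      have hk : (0 : ℝ) < 1 / ((k : ℝ) + 1) := by positivity
      cases i with
      | zero =>
        obtain ⟨q, h1, h2⟩ := exists_rat_btwn (show ε 0 < ε 0 + 1 / ((k : ℝ) + 1) by linarith)
        exact ⟨q, h1, h2, by intro j hj; omega⟩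
      | succ i =>
        obtain ⟨q, h1, h2⟩ := exists_rat_btwn
          (show ε (i+1) < min (ε (i+1) + 1 / ((k : ℝ) + 1)) (ε i) from
            lt_min (by linarith) (hanti (Nat.lt_succ_self i)))
        refine ⟨q, h1, h2.trans_le (min_le_left _ _), ?_⟩
        intro j hj
        obtain rfl : j = i := by omega
        exact h2.trans_le (min_le_right _ _)
    choose r hr1 hr2 hr3 using hex
    have hlim : ∀ i, Tendsto (fun k => (r k i : ℝ)) atTop (nhdsWithin (ε i) (Set.Ioi (ε i))) := by
      intro i
      rw [tendsto_nhdsWithin_iff]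
      refine ⟨?_, Eventually.of_forall fun k => hr1 k i⟩
      refine tendsto_of_tendsto_of_tendsto_of_le_of_le tendsto_const_nhds ?_
        (fun k => (hr1 k i).le) (fun k => (hr2 k i).le)
      simpa using (tendsto_const_nhds (x := ε i)).add tendsto_one_div_add_atTop_nhds_zero_nat
    have hT : ∀ i, Tendsto (fun k => S.trunc (r k i : ℝ) g x) atTop (nhds (S.trunc (ε i) g x)) :=
      fun i => (trunc_rightCont hd hg S (hpos i) x).comp (hlim i)
    have hF : Tendsto (fun k => finVar S ρ g N (fun i => (r k i : ℝ)) x) atTop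
        (nhds (finVar S ρ g N ε x)) := by
      unfold finVar
      refine (ENNReal.continuous_rpow_const.tendsto _).comp ?_
      refine tendsto_finsetSum _ fun i _ => ?_
      refine (ENNReal.continuous_rpow_const.tendsto _).comp ?_
      exact (ENNReal.continuous_ofReal.tendsto _).comp ((hT (i+1)).sub (hT i)).abs
    refine le_of_tendsto' hF fun k => ?_
    set l : List ℚ := (List.range (N + 1)).map (r k) with hl
    have hle : ∀ i ≤ N, (r k i : ℝ) = toSeq l i := by
      intro i hi
      have : i < N + 1 := by omega
      simp [toSeq, hl, List.getD, this]
    rw [finVar_congr S ρ g N _ _ x hle]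
    refine le_iSup_of_le N (le_iSup_of_le l (le_iSup_of_le ⟨?_, ?_⟩ le_rfl))
    · intro i hi
      rw [← hle i (by omega), ← hle (i+1) (by omega)]
      exact (hr3 k (i+1) i rfl).trans (hr1 k i)
    · rw [← hle N le_rfl]
      exact (hpos N).trans (hr1 k N)
  · exact iSup_le fun N => iSup_le fun l => iSup_le fun h => finVar_le_var S hρ g N _ x h.1 h.2

lemma var_measurable {d : ℕ} (hd : 0 < d) {Q₀ : Cube d} {M : ℝ} {g : Rd d → ℝ}
    (hg : Good Q₀ M g) (S : CZO d) {ρ : ℝ} (hρ : 2 < ρ) : Measurable (S.var ρ g) := by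
  have : S.var ρ g = fun x => ⨆ (N : ℕ) (l : List ℚ)
      (_ : (∀ i < N, toSeq l (i + 1) < toSeq l i) ∧ 0 < toSeq l N), finVar S ρ g N (toSeq l) x := by
    ext x; exact var_eq hd hg S hρ x
  rw [this]
  refine Measurable.iSup fun N => Measurable.iSup fun l => Measurable.iSup_Prop _ ?_
  unfold finVar
  have := fun r => trunc_measurable hg.meas S r
  fun_prop

/-- The cube with lower corner `x` and side length `s`. -/
def cornerCube {d : ℕ} (x : Rd d) (s : ℝ) (hs : 0 < s) : Cube d := ⟨fun i => x i + s / 2, s, hs⟩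

/-- The center of the corner cube. -/
def cornerCenter {d : ℕ} (x : Rd d) (s : ℝ) : Rd d := WithLp.toLp 2 (fun i => x i + s / 2)

lemma mem_cornerCube {d : ℕ} (x : Rd d) (s : ℝ) (hs : 0 < s) : x ∈ (cornerCube x s hs).set := by
  intro i
  simp only [cornerCube]
  constructor <;> linarith

lemma ball_subset_cornerCube {d : ℕ} (x : Rd d) (s : ℝ) (hs : 0 < s) :
    Metric.closedBall (cornerCenter x s) (s / 4) ⊆ (cornerCube x s hs).set := by
  intro y hy i
  have h1 := (coord_le_dist y (cornerCenter x s) i).trans (Metric.mem_closedBall.1 hy)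
  simp only [cornerCenter, abs_le] at h1
  simp only [cornerCube]
  constructor <;> linarith [h1.1, h1.2]

lemma dilate_cornerCube_subset {d : ℕ} (hd : 0 < d) (x : Rd d) (s : ℝ) (hs : 0 < s) :
    (cornerCube x s hs).dilate 3 ⊆ Metric.closedBall x (2 * d * s) := by
  intro y hy
  rw [Metric.mem_closedBall]
  have := dist_le_of_coord hd y x (2 * s) (by linarith) (fun i => by
    have := hy i
    simp only [cornerCube] at this
    rw [abs_le]; constructor <;> linarith [this.1, this.2])
  linarith

lemma mem_ball_cornerCenter {d : ℕ} (hd : 0 < d) (x : Rd d) (s : ℝ) (hs : 0 < s) :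
    x ∈ Metric.closedBall (cornerCenter x s) (2 * d * (s / 4)) := by
  rw [Metric.mem_closedBall]
  have := dist_le_of_coord hd x (cornerCenter x s) (s / 2) (by linarith) (fun i => by
    simp only [cornerCenter]
    rw [abs_le]; constructor <;> linarith)
  linarith

lemma cornerCube_subset {d : ℕ} (Q₀ : Cube d) (x : Rd d) (hx : x ∈ Q₀.set) :
    ∀ᶠ s in nhdsWithin (0 : ℝ) (Set.Ioi 0), ∀ hs : 0 < s, (cornerCube x s hs).set ⊆ Q₀.set := by
  have h : ∀ i, ∀ᶠ s in nhdsWithin (0 : ℝ) (Set.Ioi 0), s < Q₀.c i + Q₀.l / 2 - x i := by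
    intro i
    apply mem_nhdsWithin_of_mem_nhds
    exact Iio_mem_nhds (by linarith [(hx i).2])
  filter_upwards [eventually_all.2 h] with s hs h0 y hy i
  have h1 := hy i
  simp only [cornerCube] at h1
  have := hs i
  have := (hx i).1
  constructor <;> linarith [h1.1, h1.2]

lemma volume_ratio {d : ℕ} (hd : 0 < d) (x w : Rd d) (s : ℝ) (hs : 0 < s) :
    volume (Metric.closedBall x (2 * d * s)) =
      ENNReal.ofReal ((8 * d) ^ d) * volume (Metric.closedBall w (s / 4)) := by
  rw [MeasureTheory.Measure.addHaar_closedBall _ _ (by positivity),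
    MeasureTheory.Measure.addHaar_closedBall _ _ (by positivity), ← mul_assoc,
    ← ENNReal.ofReal_mul (by positivity)]
  simp only [finrank_euclideanSpace, Fintype.card_fin]
  rw [← mul_pow]
  congr 3
  ring

lemma Good.lintegral_ne_top {d : ℕ} (hd : 0 < d) {Q₀ : Cube d} {M : ℝ}
    {f : Rd d → ℝ} (hf : Good Q₀ M f) {p : ℝ} (hp : 0 < p) :
    ∫⁻ y, ENNReal.ofReal |f y| ^ p ≠ ∞ := by
  have hle : ∫⁻ y, ENNReal.ofReal |f y| ^ p ≤
      ∫⁻ y, Q₀.set.indicator (fun _ => ENNReal.ofReal M ^ p) y := by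
    apply lintegral_mono
    intro y
    by_cases hy : y ∈ Q₀.set
    · rw [Set.indicator_of_mem hy]
      exact ENNReal.rpow_le_rpow (ENNReal.ofReal_le_ofReal (hf.bdd y)) hp.le
    · simp [hf.supp y hy, hp]
  rw [lintegral_indicator Q₀.measurableSet_set, setLIntegral_const] at hle
  refine (hle.trans_lt ?_).ne
  exact ENNReal.mul_lt_top (ENNReal.rpow_lt_top_of_nonneg hp.le ENNReal.ofReal_ne_top)
    (Q₀.volume_lt_top hd)

lemma key {d : ℕ} (hd : 0 < d) (S : CZO d) {ρ : ℝ} (hρ : 2 < ρ) {Q₀ : Cube d} {M : ℝ}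
    {f : Rd d → ℝ} (hf : Good Q₀ M f) {p : ℝ} (hp : 0 < p) {A : ℝ≥0∞} (hA : A ≠ ∞)
    (H : ∀ g : Rd d → ℝ, Good Q₀ M g → ∀ t : ℝ, 0 < t →
      ENNReal.ofReal t ^ p * volume {x | ENNReal.ofReal t < S.var ρ g x} ≤
        A * ∫⁻ x, ENNReal.ofReal |g x| ^ p) :
    ∀ᵐ x ∂(volume : Measure (Rd d)), x ∈ Q₀.set →
      S.var ρ ((Q₀.dilate 3).indicator f) x ≤
        (ENNReal.ofReal ((8 * d) ^ d) * A) ^ (1 / p) * ENNReal.ofReal |f x|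
          + S.grandMaxLoc ρ Q₀ f x := by
  set F := (Q₀.dilate 3).indicator f with hF
  have hFG : Good Q₀ M F := hf.indicator (Q₀.measurableSet_dilate 3)
  set E : ℚ → Set (Rd d) := fun r => {y | ENNReal.ofReal r < S.var ρ F y} with hE
  have hdens : ∀ᵐ x ∂(volume : Measure (Rd d)), ∀ r : ℚ, x ∈ E r →
      Tendsto (fun s : ℝ => volume (E r ∩ Metric.closedBall (cornerCenter x s) (s / 4)) /
        volume (Metric.closedBall (cornerCenter x s) (s / 4))) (nhdsWithin 0 (Set.Ioi 0))
        (nhds 1) := by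
    rw [ae_all_iff]
    intro r
    have hEm : MeasurableSet (E r) :=
      measurableSet_lt measurable_const (var_measurable hd hFG S hρ)
    have := IsUnifLocDoublingMeasure.ae_tendsto_measure_inter_div
      (volume : Measure (Rd d)) (E r) (2 * d)
    rw [ae_restrict_iff' hEm] at this
    filter_upwards [this] with x hx hxE
    refine hx hxE (fun s => cornerCenter x s) (fun s => s / 4) ?_ ?_
    · rw [tendsto_nhdsWithin_iff]
      constructor
      · have : Tendsto (fun s : ℝ => s / 4) (nhds 0) (nhds (0 / 4)) :=
          (continuous_id.div_const 4).tendsto 0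
        rw [zero_div] at this
        exact this.mono_left nhdsWithin_le_nhds
      · filter_upwards [self_mem_nhdsWithin] with s hs
        have : 0 < s := hs
        show 0 < s / 4
        linarith
    · filter_upwards [self_mem_nhdsWithin] with s hs
      exact mem_ball_cornerCenter hd x s hs
  have hleb : ∀ᵐ x ∂(volume : Measure (Rd d)),
      Tendsto (fun s : ℝ => (∫⁻ y in Metric.closedBall x (2 * d * s), ENNReal.ofReal |f y| ^ p) /
        volume (Metric.closedBall x (2 * d * s))) (nhdsWithin 0 (Set.Ioi 0))
        (nhds (ENNReal.ofReal |f x| ^ p)) := by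
    have hm : Measurable fun y => ENNReal.ofReal |f y| ^ p := by
      have := hf.meas
      fun_prop
    have hfin : ∫⁻ y, ENNReal.ofReal |f y| ^ p ≠ ∞ := hf.lintegral_ne_top hd hp
    filter_upwards [VitaliFamily.ae_tendsto_lintegral_div
      (Besicovitch.vitaliFamily (volume : Measure (Rd d))) hm.aemeasurable hfin] with x hx
    refine (hx.comp (Besicovitch.tendsto_filterAt volume x)).comp ?_
    rw [tendsto_nhdsWithin_iff]
    constructor
    · have : Tendsto (fun s : ℝ => 2 * d * s) (nhds 0) (nhds (2 * d * 0)) :=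
        (continuous_const.mul continuous_id).tendsto 0
      rw [mul_zero] at this
      exact this.mono_left nhdsWithin_le_nhds
    · filter_upwards [self_mem_nhdsWithin] with s hs
      have : 0 < s := hs
      show 0 < 2 * d * s
      positivity
  filter_upwards [hdens, hleb] with x hxd hxl hxQ
  by_contra hcon
  rw [not_le] at hcon
  obtain ⟨r, hr0, hr1, hr2⟩ := ENNReal.lt_iff_exists_rat_btwn.1 hcon
  set G := S.grandMaxLoc ρ Q₀ f x with hG
  change _ < ENNReal.ofReal r at hr1
  have hGlt : G < ENNReal.ofReal r := lt_of_le_of_lt le_add_self hr1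
  have hGtop : G ≠ ∞ := (hGlt.trans ENNReal.ofReal_lt_top).ne
  set m := G.toReal with hm
  have hGm : G = ENNReal.ofReal m := (ENNReal.ofReal_toReal hGtop).symm
  have hm0 : 0 ≤ m := ENNReal.toReal_nonneg
  have hmr : m < r := by
    rw [hGm] at hGlt
    exact (ENNReal.ofReal_lt_ofReal_iff_of_nonneg hm0).1 hGlt
  set t : ℝ := r - m with ht
  have ht0 : 0 < t := by linarith
  have hrt : ENNReal.ofReal r = ENNReal.ofReal t + G := by
    rw [hGm, ← ENNReal.ofReal_add ht0.le hm0]; congr 1; linarith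
  rw [hrt] at hr1
  have hlt : (ENNReal.ofReal ((8 * d) ^ d) * A) ^ (1 / p) * ENNReal.ofReal |f x|
      < ENNReal.ofReal t := lt_of_add_lt_add_right hr1
  -- main estimate
  have hmain : ∀ᶠ s in nhdsWithin (0 : ℝ) (Set.Ioi 0),
      ENNReal.ofReal t ^ p * (volume (E r ∩ Metric.closedBall (cornerCenter x s) (s / 4)) /
        volume (Metric.closedBall (cornerCenter x s) (s / 4))) ≤
      (ENNReal.ofReal ((8 * d) ^ d) * A) *
        ((∫⁻ y in Metric.closedBall x (2 * d * s), ENNReal.ofReal |f y| ^ p) /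
        volume (Metric.closedBall x (2 * d * s))) := by
    filter_upwards [self_mem_nhdsWithin, cornerCube_subset Q₀ x hxQ] with s hs0 hsub
    have hs : 0 < s := hs0
    set Q := cornerCube x s hs with hQ
    set B := Metric.closedBall (cornerCenter x s) (s / 4) with hB
    set g₁ := (Q.dilate 3).indicator F with hg₁
    set g₂ := (Q₀.dilate 3 \ Q.dilate 3).indicator f with hg₂
    have hG₁ : Good Q₀ M g₁ := hFG.indicator (Q.measurableSet_dilate 3)
    have hG₂ : Good Q₀ M g₂ :=
      hf.indicator ((Q₀.measurableSet_dilate 3).diff (Q.measurableSet_dilate 3))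
    have hsum : F = g₁ + g₂ := by
      ext y
      by_cases h1 : y ∈ Q₀.dilate 3 <;> by_cases h2 : y ∈ Q.dilate 3 <;>
        simp [hF, hg₁, hg₂, h1, h2]
    have hae : ∀ᵐ y ∂(volume : Measure (Rd d)), y ∈ Q.set → S.var ρ g₂ y ≤ G := by
      rw [← ae_restrict_iff' Q.measurableSet_set]
      filter_upwards [ENNReal.ae_le_essSup (μ := volume.restrict Q.set)
        (fun ξ => S.var ρ g₂ ξ)] with y hy
      refine hy.trans ?_
      rw [hG]
      unfold CZO.grandMaxLoc
      rw [if_pos hxQ]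
      exact le_iSup₂ (f := fun (Q : Cube d) (_ : x ∈ Q.set ∧ Q.set ⊆ Q₀.set) =>
        essSup (fun ξ => S.var ρ ((Q₀.dilate 3 \ Q.dilate 3).indicator f) ξ)
        (volume.restrict Q.set)) Q ⟨mem_cornerCube x s hs, hsub hs⟩
    have hmeas : volume (E r ∩ B) ≤ volume {y | ENNReal.ofReal t < S.var ρ g₁ y} := by
      apply measure_mono_ae
      filter_upwards [hae] with y hy
      rintro ⟨hyE, hyB⟩
      have hyE' : ENNReal.ofReal r < S.var ρ F y := hyE
      rw [hsum] at hyE'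
      have h3 := hyE'.trans_le ((var_add_le hd hG₁ hG₂ S hρ y).trans
        (add_le_add le_rfl (hy (ball_subset_cornerCube x s hs hyB))))
      rw [hrt] at h3
      exact lt_of_add_lt_add_right h3
    have hIntLe : ∫⁻ y, ENNReal.ofReal |g₁ y| ^ p ≤
        ∫⁻ y in Metric.closedBall x (2 * d * s), ENNReal.ofReal |f y| ^ p := by
      rw [← lintegral_indicator measurableSet_closedBall]
      apply lintegral_mono
      intro y
      by_cases h2 : y ∈ Q.dilate 3
      · have h3 := dilate_cornerCube_subset hd x s hs h2
        rw [Set.indicator_of_mem h3]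
        apply ENNReal.rpow_le_rpow _ hp.le
        apply ENNReal.ofReal_le_ofReal
        by_cases h1 : y ∈ Q₀.dilate 3 <;> simp [hF, hg₁, h1, h2]
      · simp [hg₁, h2, hp]
    have hBpos : volume B ≠ 0 := (Metric.measure_closedBall_pos volume _ (by positivity)).ne'
    have hBtop : volume B ≠ ∞ := measure_closedBall_lt_top.ne
    have hκ0 : ENNReal.ofReal ((8 * d : ℝ) ^ d) ≠ 0 := by
      rw [Ne, ENNReal.ofReal_eq_zero, not_le]; positivity
    have hest : ENNReal.ofReal t ^ p * volume (E r ∩ B) ≤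
        A * ∫⁻ y in Metric.closedBall x (2 * d * s), ENNReal.ofReal |f y| ^ p :=
      (mul_le_mul_right hmeas _).trans ((H g₁ hG₁ t ht0).trans (mul_le_mul_right hIntLe _))
    rw [volume_ratio hd x (cornerCenter x s) s hs, ← mul_div_assoc, ← mul_div_assoc, mul_assoc,
      ENNReal.mul_div_mul_left _ _ hκ0 ENNReal.ofReal_ne_top]
    exact ENNReal.div_le_div_right hest _
  have hκA : ENNReal.ofReal ((8 * d : ℝ) ^ d) * A ≠ ∞ := ENNReal.mul_ne_top ENNReal.ofReal_ne_top hA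
  have hl1 := ENNReal.Tendsto.const_mul (a := ENNReal.ofReal t ^ p) (hxd r hr2)
    (Or.inr (ENNReal.rpow_ne_top_of_nonneg hp.le ENNReal.ofReal_ne_top))
  have hl2 := ENNReal.Tendsto.const_mul (a := ENNReal.ofReal ((8 * d : ℝ) ^ d) * A) hxl
    (Or.inr hκA)
  have hle := le_of_tendsto_of_tendsto hl1 hl2 hmain
  rw [mul_one] at hle
  have hle2 := ENNReal.rpow_le_rpow hle (show 0 ≤ 1 / p by positivity)
  rw [ENNReal.mul_rpow_of_nonneg _ _ (by positivity), ← ENNReal.rpow_mul, ← ENNReal.rpow_mul,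
    mul_one_div_cancel hp.ne', ENNReal.rpow_one, ENNReal.rpow_one] at hle2
  exact absurd hlt (not_lt.2 hle2)

lemma weak11_attained {d : ℕ} (S : CZO d) {ρ : ℝ} (hW : S.weak11Norm ρ ≠ ∞)
    {g : Rd d → ℝ} (hg : Measurable g)
    (hI : ∫⁻ x, ENNReal.ofReal |g x| ≠ ∞) (t : ℝ) (ht : 0 < t) :
    ENNReal.ofReal t * volume {x | ENNReal.ofReal t < S.var ρ g x} ≤
      S.weak11Norm ρ * ∫⁻ x, ENNReal.ofReal |g x| := by
  have hlim : Tendsto (fun A : ℝ≥0∞ => A * ∫⁻ x, ENNReal.ofReal |g x|)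
      (nhdsWithin (S.weak11Norm ρ) (Set.Ioi (S.weak11Norm ρ)))
      (nhds (S.weak11Norm ρ * ∫⁻ x, ENNReal.ofReal |g x|)) :=
    (ENNReal.Tendsto.mul_const tendsto_id (Or.inr hI)).mono_left nhdsWithin_le_nhds
  have : (nhdsWithin (S.weak11Norm ρ) (Set.Ioi (S.weak11Norm ρ))).NeBot :=
    nhdsGT_neBot_of_exists_gt ⟨∞, hW.lt_top⟩
  refine ge_of_tendsto hlim ?_
  filter_upwards [self_mem_nhdsWithin] with A hA
  obtain ⟨a, ha, haA⟩ := sInf_lt_iff.1 (show sInf _ < A from hA)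
  exact (ha g hg t ht).trans (mul_le_mul_left haA.le _)

/-- Pointwise domination of the variation by the weak `(1,1)` norm and the
local grand maximal truncated operator. -/
theorem variation_pointwise_domination (d : ℕ) (hd : 0 < d) :
    ∃ C : ℝ, 0 < C ∧ ∀ (S : CZO d) (ρ q : ℝ), 2 < ρ → 1 < q → S.VarBdd ρ q →
      ∀ (Q₀ : Cube d) (f : Rd d → ℝ), Measurable f → (∃ M : ℝ, ∀ x, |f x| ≤ M) →
        (∀ x, x ∉ Q₀.set → f x = 0) →
        ∀ᵐ x ∂(volume : Measure (Rd d)), x ∈ Q₀.set →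
          S.var ρ ((Q₀.dilate 3).indicator f) x ≤
            ENNReal.ofReal C * S.weak11Norm ρ * ENNReal.ofReal |f x| +
              S.grandMaxLoc ρ Q₀ f x := by
  have hd' : (0 : ℝ) < d := by exact_mod_cast hd
  refine ⟨(8 * d) ^ d, by positivity, ?_⟩
  rintro S ρ q hρ hq ⟨A, hA0, hA⟩ Q₀ f hfm ⟨M, hM⟩ hsupp
  have hf : Good Q₀ M f := ⟨hfm, hM, hsupp⟩
  by_cases hW : S.weak11Norm ρ = ∞
  · have hq0 : 0 < q := by linarith
    have := key hd S hρ hf hq0 (A := ENNReal.ofReal A) ENNReal.ofReal_ne_top (by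
      intro g hg t ht
      refine le_trans ?_ (hA g hg.meas)
      refine le_trans ?_ (mul_meas_ge_le_lintegral
        ((var_measurable hd hg S hρ).pow_const q) (ENNReal.ofReal t ^ q))
      refine mul_le_mul_right (measure_mono fun y hy => ?_) _
      exact ENNReal.rpow_le_rpow (le_of_lt hy) hq0.le)
    filter_upwards [this] with x hx hxQ
    by_cases hfx : f x = 0
    · simpa [hfx] using hx hxQ
    · have h1 : ENNReal.ofReal ((8 * d : ℝ) ^ d) ≠ 0 := by
        rw [Ne, ENNReal.ofReal_eq_zero, not_le]; positivity
      have h2 : ENNReal.ofReal |f x| ≠ 0 := by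
        rw [Ne, ENNReal.ofReal_eq_zero, not_le]; positivity
      rw [hW, ENNReal.mul_top h1, ENNReal.top_mul h2, top_add]
      exact le_top
  · have := key hd S hρ hf one_pos (A := S.weak11Norm ρ) hW (by
      intro g hg t ht
      have hI := hg.lintegral_ne_top hd one_pos
      simp only [ENNReal.rpow_one] at hI ⊢
      exact weak11_attained S hW hg.meas hI t ht)
    simpa using this
end
end
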